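/- Let Ω be a separable metric space in which every Borel probability measure is Radon. Fix ρ⁰ ∈ P(Ω) and points x_i ∈ Ω (i = 1,…,n, n ≥ 1) with (1/n)Σ_{i=1}^n δ_{x_i} → ρ⁰ narrowly as n → ∞. Let ζ : Ω → P(Ω) be narrowly continuous, and for each n let Y₁,…,Y_n be independent with Y_i distributed according to ζ^{x_i}; set p(dx dy) := ρ⁰(dx) ζ^x(dy). Then the empirical measures L_n := (1/n)Σ_{i=1}^n δ_{Y_i} satisfy the large-deviation principle in P(Ω) (with the narrow topology) with speed n and rate functional J(ρ) := inf_{q ∈ Γ(ρ⁰,ρ)} H(q|p), where Γ(ρ⁰,ρ) is the set of probability measures on Ω×Ω with first marginal ρ⁰ and second marginal ρ. -/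

import Mathlib

open MeasureTheory Filter Topology Set
open scoped ENNReal NNReal Classical

noncomputable section

/-- A separable (pseudo)metric space is second countable. -/
instance (priority := 50) secondCountable_of_sep {Ω : Type*} [MetricSpace Ω]
    [TopologicalSpace.SeparableSpace Ω] : SecondCountableTopology Ω :=
  UniformSpace.secondCountable_of_separable Ω

/-- The measurable structure on the space of probability measures (as a subtype
of measures). -/
noncomputable instance probMeasurableSpace {Ω : Type*} [MeasurableSpace Ω] :
    MeasurableSpace (ProbabilityMeasure Ω) :=
  show MeasurableSpace {μ : Measure Ω // IsProbabilityMeasure μ} from inferInstance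

/-- Relative entropy `H(q|p) = ∫ log(dq/dp) dq ∈ [0,∞]` for probability
measures. -/
noncomputable def relEntNN {α : Type*} [MeasurableSpace α] (q p : Measure α) : ℝ≥0∞ :=
  if q ≪ p ∧ Integrable (fun x => Real.log ((q.rnDeriv p x).toReal)) q
  then ENNReal.ofReal (∫ x, Real.log ((q.rnDeriv p x).toReal) ∂q) else ⊤

/-- The large-deviation principle with speed `n`. -/
def IsLDP {X : Type*} [TopologicalSpace X] [MeasurableSpace X]
    (μ : ℕ → Measure X) (J : X → ℝ≥0∞) : Prop :=
  ((∃ x, J x ≠ ⊤) ∧ ∀ c : ℝ≥0∞, c ≠ ⊤ → IsCompact {x | J x ≤ c}) ∧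
  (∀ U : Set X, IsOpen U →
    (-(((⨅ x ∈ U, J x) : ℝ≥0∞) : EReal)) ≤
      liminf (fun n : ℕ => (((n : ℝ)⁻¹ : ℝ) : EReal) * ENNReal.log (μ n U)) atTop) ∧
  (∀ C : Set X, IsClosed C →
    limsup (fun n : ℕ => (((n : ℝ)⁻¹ : ℝ) : EReal) * ENNReal.log (μ n C)) atTop ≤
      (-(((⨅ x ∈ C, J x) : ℝ≥0∞) : EReal)))

section
set_option linter.unusedSectionVars false


/-! ### Part 1: topology and tightness -/

lemma aux_inner {X : Type*} [MetricSpace X] [MeasurableSpace X] [BorelSpace X]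
    (ν : Measure X) [IsProbabilityMeasure ν]
    (hT : ∀ ε : ℝ≥0∞, ε ≠ 0 → ∃ K, IsCompact K ∧ ν Kᶜ ≤ ε)
    {W : Set X} {ε : ℝ≥0∞} (h : ν Wᶜ < ε) :
    ∃ K ⊆ W, IsCompact K ∧ ν Kᶜ < ε := by
  obtain ⟨U, hWU, hU, hUε⟩ := Set.exists_isOpen_lt_of_lt Wᶜ ε h
  obtain ⟨δ, hδ, hδ2⟩ := ENNReal.lt_iff_exists_add_pos_lt.1 hUε
  obtain ⟨K, hK, hKδ⟩ := hT δ (by simpa using hδ.ne')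
  refine ⟨K ∩ Uᶜ, fun x hx => ?_, hK.inter_right hU.isClosed_compl, ?_⟩
  · by_contra hxW
    exact hx.2 (hWU hxW)
  · calc ν (K ∩ Uᶜ)ᶜ ≤ ν (U ∪ Kᶜ) := measure_mono (by
          rw [compl_inter, compl_compl, union_comm])
      _ ≤ ν U + ν Kᶜ := measure_union_le _ _
      _ ≤ ν U + δ := by gcongr
      _ < ε := hδ2

lemma tight_prod {Ω : Type*} [MetricSpace Ω] [TopologicalSpace.SeparableSpace Ω]
    [MeasurableSpace Ω] [BorelSpace Ω]
    (hT : ∀ ν : Measure Ω, IsProbabilityMeasure ν → ∀ ε : ℝ≥0∞, ε ≠ 0 →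
      ∃ K, IsCompact K ∧ ν Kᶜ ≤ ε) :
    ∀ ν : Measure (Ω × Ω), IsProbabilityMeasure ν → ∀ ε : ℝ≥0∞, ε ≠ 0 →
      ∃ K, IsCompact K ∧ ν Kᶜ ≤ ε := by
  intro ν hν ε hε
  have h2 : ε / 2 ≠ 0 := by simpa using hε
  obtain ⟨K1, hK1, h1⟩ := hT (ν.map Prod.fst)
    (Measure.isProbabilityMeasure_map measurable_fst.aemeasurable) _ h2
  obtain ⟨K2, hK2, h2⟩ := hT (ν.map Prod.snd)
    (Measure.isProbabilityMeasure_map measurable_snd.aemeasurable) _ h2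
  rw [Measure.map_apply measurable_fst hK1.measurableSet.compl] at h1
  rw [Measure.map_apply measurable_snd hK2.measurableSet.compl] at h2
  refine ⟨K1 ×ˢ K2, hK1.prod hK2, ?_⟩
  calc ν (K1 ×ˢ K2)ᶜ ≤ ν (Prod.fst ⁻¹' K1ᶜ ∪ Prod.snd ⁻¹' K2ᶜ) := measure_mono (by
        intro z hz
        simp only [mem_compl_iff, mem_prod, not_and_or] at hz
        simpa using hz)
    _ ≤ _ := measure_union_le _ _
    _ ≤ ε / 2 + ε / 2 := by gcongr
    _ = ε := ENNReal.add_halves ε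

lemma isCompact_union_tendsto {X : Type*} [MetricSpace X] {S : Set X} (hS : IsCompact S)
    (K : ℕ → Set X) (hK : ∀ n, IsCompact (K n))
    (h : ∀ δ > 0, ∀ᶠ n in atTop, K n ⊆ Metric.thickening δ S) :
    IsCompact (S ∪ ⋃ n, K n) := by
  refine isCompact_of_finite_subcover fun {ι} U hU hcov => ?_
  obtain ⟨t, ht⟩ := hS.elim_finite_subcover U hU (subset_union_left.trans hcov)
  obtain ⟨δ, hδ, hδt⟩ := hS.exists_thickening_subset_open
    (isOpen_biUnion fun i (_ : i ∈ t) => hU i) ht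
  obtain ⟨N, hN⟩ := eventually_atTop.1 (h δ hδ)
  have hc : IsCompact (⋃ n ∈ Finset.range N, K n) :=
    (Finset.range N).isCompact_biUnion fun n _ => hK n
  obtain ⟨t', ht'⟩ := hc.elim_finite_subcover U hU (by
    refine Subset.trans ?_ (subset_union_right.trans hcov)
    exact iUnion₂_subset fun n _ => subset_iUnion K n)
  refine ⟨t ∪ t', ?_⟩
  have e1 : (⋃ i ∈ t, U i) ⊆ ⋃ i ∈ t ∪ t', U i :=
    biUnion_subset_biUnion_left fun i hi => by simp at hi ⊢; exact Or.inl hi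
  have e2 : (⋃ i ∈ t', U i) ⊆ ⋃ i ∈ t ∪ t', U i :=
    biUnion_subset_biUnion_left fun i hi => by simp at hi ⊢; exact Or.inr hi
  refine union_subset (ht.trans e1) (iUnion_subset fun n => ?_)
  by_cases hn : n < N
  · refine Subset.trans ?_ (ht'.trans e2)
    exact subset_biUnion_of_mem (u := fun n => K n) (by simpa using hn)
  · exact (hN n (not_lt.1 hn)).trans (hδt.trans e1)

lemma lecam {X : Type*} [MetricSpace X] [MeasurableSpace X] [BorelSpace X]
    (hT : ∀ ν : Measure X, IsProbabilityMeasure ν → ∀ ε : ℝ≥0∞, ε ≠ 0 →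
      ∃ K, IsCompact K ∧ ν Kᶜ ≤ ε)
    (ν : ℕ → ProbabilityMeasure X) (ν0 : ProbabilityMeasure X)
    (hν : Tendsto ν atTop (𝓝 ν0)) (ε : ℝ≥0∞) (hε : ε ≠ 0) :
    ∃ K, IsCompact K ∧ ∀ n, (ν n : Measure X) Kᶜ ≤ ε := by
  obtain ⟨ε', hε'0, hε'⟩ := exists_between (pos_iff_ne_zero.2 hε)
  obtain ⟨S, hS, hSε⟩ := hT ν0 inferInstance ε' hε'0.ne'
  have hSε := hSε.trans_lt hε'
  let W : ℕ → Set X := fun k => if k = 0 then univ else Metric.thickening (1 / ((k : ℝ))) S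
  have hWo : ∀ k, IsOpen (W k) := by
    intro k
    by_cases hk : k = 0
    · simp [W, hk]
    · simp only [W, hk, if_false]; exact Metric.isOpen_thickening
  have hSW : ∀ k, S ⊆ W k := by
    intro k
    by_cases hk : k = 0
    · simp [W, hk]
    · simp only [W, hk, if_false]
      exact Metric.self_subset_thickening (by positivity) S
  let P : ℕ → ℕ → Prop := fun n k => (ν n : Measure X) (W k)ᶜ < ε
  have hP0 : ∀ n, P n 0 := fun n => by simp [P, W, pos_iff_ne_zero, hε]
  have hPe : ∀ k, ∀ᶠ n in atTop, P n k := by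
    intro k
    have := ProbabilityMeasure.limsup_measure_closed_le_of_tendsto hν (hWo k).isClosed_compl
    exact eventually_lt_of_limsup_lt (this.trans_lt
      ((measure_mono (compl_subset_compl.2 (hSW k))).trans_lt hSε))
  let k : ℕ → ℕ := fun n => Nat.findGreatest (P n) n
  have hk : ∀ n, P n (k n) := fun n => Nat.findGreatest_spec (Nat.zero_le n) (hP0 n)
  have hkm : ∀ m, ∀ᶠ n in atTop, m ≤ k n := by
    intro m
    filter_upwards [hPe m, eventually_ge_atTop m] with n h1 h2
    exact Nat.le_findGreatest h2 h1
  choose K hKW hKc hKε using fun n => aux_inner (ν n : Measure X) (hT _ inferInstance)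
    (hk n)
  refine ⟨S ∪ ⋃ n, K n, isCompact_union_tendsto hS K hKc ?_, fun n => ?_⟩
  · intro δ hδ
    obtain ⟨m, hm⟩ := exists_nat_gt (1 / δ)
    have hm0 : 0 < m := by
      rcases Nat.eq_zero_or_pos m with h | h
      · subst h; have : 0 < 1 / δ := by positivity
        simp at hm; linarith
      · exact h
    filter_upwards [hkm m] with n hn
    refine (hKW n).trans ?_
    have : k n ≠ 0 := by omega
    simp only [W, this, if_false]
    apply Metric.thickening_mono
    have h1 : (m : ℝ) ≤ k n := by exact_mod_cast hn
    rw [div_le_iff₀ (by positivity)]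
    rw [div_lt_iff₀ hδ] at hm
    nlinarith
  · refine le_trans (measure_mono (compl_subset_compl.2 ?_)) (hKε n).le
    exact (subset_iUnion K n).trans subset_union_right

lemma measurableSet_closed_prob {X : Type*} [MetricSpace X] [TopologicalSpace.SeparableSpace X]
    [MeasurableSpace X] [BorelSpace X] {C : Set (ProbabilityMeasure X)} (hC : IsClosed C) :
    @MeasurableSet _ probMeasurableSpace C := by
  have : Countable (TopologicalSpace.countableBasis X) :=
    (TopologicalSpace.countable_countableBasis X).to_subtype
  have : Countable (Finset (TopologicalSpace.countableBasis X)) := inferInstance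
  let V : (Finset (TopologicalSpace.countableBasis X)) → Set X := fun s => ⋃ v ∈ s, v.1
  have hV : ∀ s, IsOpen (V s) := fun s => isOpen_biUnion fun v _ =>
    TopologicalSpace.isOpen_of_mem_countableBasis v.2
  have hpos : ∀ m : ℕ, (0 : ℝ) < 1 / ((m : ℝ) + 1) := fun m => by positivity
  let f : (Finset (TopologicalSpace.countableBasis X)) × ℕ → BoundedContinuousFunction X ℝ≥0 := fun j =>
    thickenedIndicator (hpos j.2) (V j.1)ᶜ
  let F : ProbabilityMeasure X → ((Finset (TopologicalSpace.countableBasis X)) × ℕ → ℝ≥0∞) := fun ρ j => ∫⁻ x, f j x ∂(ρ : Measure X)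
  have hFc : Continuous F := by
    refine continuous_pi fun j => ?_
    exact ProbabilityMeasure.continuous_lintegral_boundedContinuousFunction (f j)
  have hFm : @Measurable _ _ probMeasurableSpace _ F := by
    refine @measurable_pi_lambda _ _ _ probMeasurableSpace _ _ fun j => ?_
    refine Measurable.comp (g := fun ν : Measure X => ∫⁻ x, f j x ∂ν) ?_ measurable_subtype_coe
    exact Measure.measurable_lintegral (by fun_prop)
  have hind : IsInducing F := by
    refine isInducing_iff_nhds.2 fun ρ => le_antisymm ?_ ?_
    · exact (hFc.tendsto ρ).le_comap
    · have : Tendsto (fun ρ' : ProbabilityMeasure X => ρ') (comap F (𝓝 (F ρ))) (𝓝 ρ) := by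
        refine tendsto_of_forall_isClosed_limsup_le' fun D hD => ?_
        have key : ∀ s : (Finset (TopologicalSpace.countableBasis X)), limsup (fun ρ' : ProbabilityMeasure X => (ρ' : Measure X) (V s)ᶜ)
            (comap F (𝓝 (F ρ))) ≤ (ρ : Measure X) (V s)ᶜ := by
          intro s
          have h1 : ∀ m : ℕ, limsup (fun ρ' : ProbabilityMeasure X => (ρ' : Measure X) (V s)ᶜ)
            (comap F (𝓝 (F ρ))) ≤ ∫⁻ x, f (s, m) x ∂(ρ : Measure X) := by
            intro m
            by_cases hb : (comap F (𝓝 (F ρ))).NeBot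
            swap
            · rw [not_neBot] at hb; rw [hb]; simp
            have ht : Tendsto (fun ρ' => F ρ' (s, m)) (comap F (𝓝 (F ρ))) (𝓝 (F ρ (s, m))) :=
              (tendsto_pi_nhds.1 tendsto_comap) (s, m)
            refine le_trans (limsup_le_limsup (Eventually.of_forall fun ρ' => ?_)) ht.limsup_eq.le
            exact measure_le_lintegral_thickenedIndicator _ (hV s).isClosed_compl.measurableSet _
          have h2 := tendsto_lintegral_thickenedIndicator_of_isClosed (ρ : Measure X)
            (hV s).isClosed_compl hpos tendsto_one_div_add_atTop_nhds_zero_nat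
          exact ge_of_tendsto' h2 h1
        have h3 : D = ⋂ s : {s : (Finset (TopologicalSpace.countableBasis X)) // V s ⊆ Dᶜ}, (V s.1)ᶜ := by
          apply compl_injective
          rw [compl_iInter]
          simp only [compl_compl]
          refine Subset.antisymm (fun z hz => ?_) (iUnion_subset fun s => s.2)
          obtain ⟨v, hv, hzv, hvD⟩ := (TopologicalSpace.isBasis_countableBasis
            X).exists_subset_of_mem_open hz hD.isOpen_compl
          refine mem_iUnion.2 ⟨⟨{⟨v, hv⟩}, ?_⟩, ?_⟩
          · simp only [V, Finset.mem_singleton, iUnion_iUnion_eq_left]; exact hvD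
          · simp only [V, Finset.mem_singleton, iUnion_iUnion_eq_left]; exact hzv
        have h4 : (ρ : Measure X) D = ⨅ s : {s : (Finset (TopologicalSpace.countableBasis X)) // V s ⊆ Dᶜ}, (ρ : Measure X) (V s.1)ᶜ := by
          conv_lhs => rw [h3]
          refine Directed.measure_iInter
            (fun s => (hV s.1).isClosed_compl.measurableSet.nullMeasurableSet) ?_
            ⟨⟨∅, by simp [V]⟩, measure_ne_top _ _⟩
          intro s t
          refine ⟨⟨s.1 ∪ t.1, ?_⟩, ?_, ?_⟩
          · intro z hz
            simp only [V, mem_iUnion, Finset.mem_union] at hz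
            obtain ⟨v, hv | hv, hz⟩ := hz
            · exact s.2 (mem_biUnion hv hz)
            · exact t.2 (mem_biUnion hv hz)
          · refine compl_subset_compl.2 (biUnion_subset_biUnion_left fun v hv => ?_)
            simp at hv ⊢; exact Or.inl hv
          · refine compl_subset_compl.2 (biUnion_subset_biUnion_left fun v hv => ?_)
            simp at hv ⊢; exact Or.inr hv
        rw [h4]
        refine le_iInf fun s => le_trans (limsup_le_limsup (Eventually.of_forall fun ρ' => ?_))
          (key s.1)
        exact measure_mono (fun z hz hz' => s.2 hz' hz)
      exact this
  obtain ⟨D, hD, rfl⟩ := hind.isClosed_iff.1 hC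
  exact hFm hD.measurableSet

end

section
set_option linter.unusedSectionVars false



/-! ### Part 2: set-up -/

section pi

lemma lintegral_pi_prod' {n : ℕ} {Ω : Type*} [MeasurableSpace Ω] (ν : Fin n → Measure Ω)
    [∀ i, IsProbabilityMeasure (ν i)] (g : Fin n → Ω → ℝ≥0∞) (hg : ∀ i, Measurable (g i)) :
    ∫⁻ y, ∏ i, g i (y i) ∂(Measure.pi ν) = ∏ i, ∫⁻ y, g i y ∂(ν i) := by
  have h1 := ProbabilityTheory.iIndepFun_pi (μ := ν) (X := g) (fun i => (hg i).aemeasurable)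
  have h2 := ProbabilityTheory.lintegral_prod_eq_prod_lintegral_of_indepFun Finset.univ
    (fun i (y : Fin n → Ω) => g i (y i)) h1 (fun i => (hg i).comp (measurable_pi_apply i))
  rw [h2]
  refine Finset.prod_congr rfl fun i _ => ?_
  exact (measurePreserving_eval ν i).lintegral_comp (hg i)

lemma pi_withDensity' {n : ℕ} {Ω : Type*} [MeasurableSpace Ω] (ν : Fin n → Measure Ω)
    [∀ i, IsProbabilityMeasure (ν i)] (g : Fin n → Ω → ℝ≥0∞) (hg : ∀ i, Measurable (g i))
    [∀ i, IsProbabilityMeasure ((ν i).withDensity (g i))] :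
    Measure.pi (fun i => (ν i).withDensity (g i)) =
      (Measure.pi ν).withDensity (fun y => ∏ i, g i (y i)) := by
  refine Measure.pi_eq fun s hs => ?_
  rw [withDensity_apply _ (MeasurableSet.univ_pi hs), ← lintegral_indicator
    (MeasurableSet.univ_pi hs)]
  have : ∀ y : Fin n → Ω, (univ.pi s).indicator (fun y => ∏ i, g i (y i)) y =
      ∏ i, (s i).indicator (g i) (y i) := by
    intro y
    by_cases hy : y ∈ univ.pi s
    · rw [indicator_of_mem hy]
      refine Finset.prod_congr rfl fun i _ => ?_
      rw [indicator_of_mem (hy i (mem_univ i))]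
    · rw [indicator_of_notMem hy]
      simp only [mem_univ_pi, not_forall] at hy
      obtain ⟨i, hi⟩ := hy
      exact (Finset.prod_eq_zero (Finset.mem_univ i) (indicator_of_notMem hi _)).symm
  simp_rw [this]
  rw [lintegral_pi_prod' ν _ (fun i => (hg i).indicator (hs i))]
  refine Finset.prod_congr rfl fun i _ => ?_
  rw [lintegral_indicator (hs i), withDensity_apply _ (hs i)]

lemma chernoff {n : ℕ} {Ω : Type*} [MeasurableSpace Ω] (ν : Fin n → Measure Ω)
    [∀ i, IsProbabilityMeasure (ν i)] (F : Fin n → Ω → ℝ) (hF : ∀ i, Measurable (F i)) (c : ℝ) :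
    (Measure.pi ν) {y | c ≤ ∑ i, F i (y i)} ≤
      ENNReal.ofReal (Real.exp (-c)) * ∏ i, ∫⁻ y, ENNReal.ofReal (Real.exp (F i y)) ∂(ν i) := by
  have hm : ∀ i, Measurable fun y => ENNReal.ofReal (Real.exp (F i y)) := fun i =>
    ENNReal.measurable_ofReal.comp (Real.measurable_exp.comp (hF i))
  rw [← lintegral_pi_prod' ν _ hm]
  have h := mul_meas_ge_le_lintegral (μ := Measure.pi ν)
    (f := fun y => ∏ i, ENNReal.ofReal (Real.exp (F i (y i))))
    (Finset.measurable_prod _ fun i _ => (hm i).comp (measurable_pi_apply i))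
    (ENNReal.ofReal (Real.exp c))
  have hset : {y : Fin n → Ω | c ≤ ∑ i, F i (y i)} = {y | ENNReal.ofReal (Real.exp c) ≤
      ∏ i, ENNReal.ofReal (Real.exp (F i (y i)))} := by
    ext y
    simp only [mem_ofPred_eq]
    rw [← ENNReal.ofReal_prod_of_nonneg (fun i _ => (Real.exp_pos _).le), ← Real.exp_sum,
      ENNReal.ofReal_le_ofReal_iff (Real.exp_pos _).le, Real.exp_le_exp]
  rw [hset]
  generalize (Measure.pi ν) {y | ENNReal.ofReal (Real.exp c) ≤
      ∏ i, ENNReal.ofReal (Real.exp (F i (y i)))} = m at h ⊢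
  have e : m = ENNReal.ofReal (Real.exp (-c)) * (ENNReal.ofReal (Real.exp c) * m) := by
    rw [← mul_assoc, ← ENNReal.ofReal_mul (Real.exp_pos _).le, ← Real.exp_add]
    simp
  rw [e]
  gcongr

end pi

section avg

variable {X : Type*} [MeasurableSpace X]

lemma avg_prob [Nonempty X] {n : ℕ} (hn : n ≠ 0) (m : Fin n → ProbabilityMeasure X) :
    IsProbabilityMeasure ((n : ℝ≥0∞)⁻¹ • ∑ i, (m i : Measure X)) := by
  constructor
  simp only [Measure.smul_apply, Measure.coe_finsetSum, Finset.sum_apply, measure_univ,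
    Finset.sum_const, Finset.card_univ, Fintype.card_fin, nsmul_eq_mul, mul_one, smul_eq_mul]
  exact ENNReal.inv_mul_cancel (by exact_mod_cast hn) (by simp)

/-- The average of finitely many probability measures. -/
def avgP [Nonempty X] (n : ℕ) (m : Fin n → ProbabilityMeasure X) : ProbabilityMeasure X :=
  if hn : n = 0 then diracProba (Classical.arbitrary X)
  else ⟨(n : ℝ≥0∞)⁻¹ • ∑ i, (m i : Measure X), avg_prob hn m⟩

lemma avgP_coe [Nonempty X] {n : ℕ} (hn : n ≠ 0) (m : Fin n → ProbabilityMeasure X) :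
    (avgP n m : Measure X) = (n : ℝ≥0∞)⁻¹ • ∑ i, (m i : Measure X) := by
  simp [avgP, hn]

lemma integral_avgP [Nonempty X] {n : ℕ} (hn : n ≠ 0) (m : Fin n → ProbabilityMeasure X)
    {f : X → ℝ} (hf : ∀ i, Integrable f (m i : Measure X)) :
    ∫ z, f z ∂(avgP n m : Measure X) = (n : ℝ)⁻¹ * ∑ i, ∫ z, f z ∂(m i : Measure X) := by
  rw [avgP_coe hn, integral_smul_measure, integral_finsetSum_measure (fun i _ => hf i)]
  simp

/-- Empirical measure. -/
def empP [Nonempty X] (n : ℕ) (z : Fin n → X) : ProbabilityMeasure X :=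
  avgP n fun i => diracProba (z i)

lemma empP_coe [Nonempty X] {n : ℕ} (hn : n ≠ 0) (z : Fin n → X) :
    (empP n z : Measure X) = (n : ℝ≥0∞)⁻¹ • ∑ i, Measure.dirac (z i) := by
  rw [empP, avgP_coe hn]; rfl

lemma integral_empP [Nonempty X] {n : ℕ} (hn : n ≠ 0) (z : Fin n → X) {f : X → ℝ}
    (hf : Measurable f) :
    ∫ z, f z ∂(empP n z : Measure X) = (n : ℝ)⁻¹ * ∑ i, f (z i) := by
  rw [empP, integral_avgP hn]
  · congr 1
    refine Finset.sum_congr rfl fun i _ => ?_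
    exact integral_dirac' f (z i) hf.stronglyMeasurable
  · intro i
    exact integrable_dirac' hf.stronglyMeasurable (by simp)

end avg

section fib

variable {Ω : Type*} [MetricSpace Ω] [TopologicalSpace.SeparableSpace Ω]
    [MeasurableSpace Ω] [BorelSpace Ω]

/-- `δ_a ⊗ ζ^a`. -/
def fib (ζ : Ω → ProbabilityMeasure Ω) (a : Ω) : ProbabilityMeasure (Ω × Ω) :=
  (diracProba a).prod (ζ a)

lemma fib_coe (ζ : Ω → ProbabilityMeasure Ω) (a : Ω) :
    (fib ζ a : Measure (Ω × Ω)) = (ζ a : Measure Ω).map (Prod.mk a) := by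
  change (Measure.dirac a).prod (ζ a : Measure Ω) = _
  rw [Measure.dirac_prod]

lemma integral_fib (ζ : Ω → ProbabilityMeasure Ω) (a : Ω) {f : Ω × Ω → ℝ} (hf : Measurable f) :
    ∫ z, f z ∂(fib ζ a : Measure (Ω × Ω)) = ∫ b, f (a, b) ∂(ζ a : Measure Ω) := by
  rw [fib_coe, integral_map measurable_prodMk_left.aemeasurable hf.aestronglyMeasurable]

lemma continuous_fib {ζ : Ω → ProbabilityMeasure Ω} (hζ : Continuous ζ) : Continuous (fib ζ) :=
  ProbabilityMeasure.continuous_prod.comp (continuous_diracProba.prodMk hζ)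

lemma continuous_fibInt {ζ : Ω → ProbabilityMeasure Ω} (hζ : Continuous ζ)
    (F : BoundedContinuousFunction (Ω × Ω) ℝ) :
    Continuous fun a => ∫ b, F (a, b) ∂(ζ a : Measure Ω) := by
  have := (ProbabilityMeasure.continuous_integral_boundedContinuousFunction F).comp
    (continuous_fib hζ)
  convert this using 2 with a
  exact (integral_fib ζ a F.continuous.measurable).symm

lemma measurable_ker {ζ : Ω → ProbabilityMeasure Ω} (hζ : Continuous ζ) :
    Measurable fun a => (ζ a : Measure Ω) := by
  refine Measurable.measure_of_isPiSystem_of_isProbabilityMeasure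
    (BorelSpace.measurable_eq.trans borel_eq_generateFrom_isClosed) isPiSystem_isClosed
    fun D hD => ?_
  have hpos : ∀ m : ℕ, (0 : ℝ) < 1 / ((m : ℝ) + 1) := fun m => by positivity
  refine ENNReal.measurable_of_tendsto (f := fun m a =>
    ∫⁻ z, thickenedIndicator (hpos m) D z ∂(ζ a : Measure Ω)) (fun m => ?_) ?_
  · exact ((ProbabilityMeasure.continuous_lintegral_boundedContinuousFunction _).comp
      hζ).measurable
  · refine tendsto_pi_nhds.2 fun a => ?_
    exact tendsto_lintegral_thickenedIndicator_of_isClosed (ζ a : Measure Ω) hD hpos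
      tendsto_one_div_add_atTop_nhds_zero_nat

/-- The kernel given by a continuous family. -/
def ker (ζ : Ω → ProbabilityMeasure Ω) (hζ : Continuous ζ) : ProbabilityTheory.Kernel Ω Ω :=
  ⟨fun a => (ζ a : Measure Ω), measurable_ker hζ⟩

lemma ker_apply {ζ : Ω → ProbabilityMeasure Ω} (hζ : Continuous ζ) (a : Ω) :
    ker ζ hζ a = (ζ a : Measure Ω) := rfl

instance ker_markov {ζ : Ω → ProbabilityMeasure Ω} (hζ : Continuous ζ) :
    ProbabilityTheory.IsMarkovKernel (ker ζ hζ) :=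
  ⟨fun a => by rw [ker_apply]; infer_instance⟩

/-- The reference measure. -/
def refP (ρ0 : ProbabilityMeasure Ω) (ζ : Ω → ProbabilityMeasure Ω) (hζ : Continuous ζ) :
    ProbabilityMeasure (Ω × Ω) :=
  ⟨(ρ0 : Measure Ω).compProd (ker ζ hζ), inferInstance⟩

lemma refP_coe (ρ0 : ProbabilityMeasure Ω) (ζ : Ω → ProbabilityMeasure Ω) (hζ : Continuous ζ) :
    (refP ρ0 ζ hζ : Measure (Ω × Ω)) = (ρ0 : Measure Ω).compProd (ker ζ hζ) := rfl

lemma refP_eq_bind (ρ0 : ProbabilityMeasure Ω) (ζ : Ω → ProbabilityMeasure Ω)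
    (hζ : Continuous ζ) : (refP ρ0 ζ hζ : Measure (Ω × Ω)) =
      (ρ0 : Measure Ω).bind fun a => ((ζ a : Measure Ω)).map (Prod.mk a) := by
  have hm : Measurable fun a => ((ζ a : Measure Ω)).map (Prod.mk a) := by
    refine Measure.measurable_of_measurable_coe _ fun s hs => ?_
    have h2 : ∀ a, ((ζ a : Measure Ω)).map (Prod.mk a) s = (ker ζ hζ a) (Prod.mk a ⁻¹' s) :=
      fun a => by rw [Measure.map_apply measurable_prodMk_left hs]; rfl
    simp_rw [h2]
    exact ProbabilityTheory.Kernel.measurable_kernel_prodMk_left hs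
  ext s hs
  rw [Measure.bind_apply hs hm.aemeasurable, refP_coe, Measure.compProd_apply hs]
  refine lintegral_congr fun a => ?_
  rw [Measure.map_apply measurable_prodMk_left hs]; rfl

lemma lintegral_refP (ρ0 : ProbabilityMeasure Ω) {ζ : Ω → ProbabilityMeasure Ω}
    (hζ : Continuous ζ) {f : Ω × Ω → ℝ≥0∞} (hf : Measurable f) :
    ∫⁻ z, f z ∂(refP ρ0 ζ hζ : Measure (Ω × Ω)) =
      ∫⁻ a, ∫⁻ b, f (a, b) ∂(ζ a : Measure Ω) ∂(ρ0 : Measure Ω) := by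
  rw [refP_coe, Measure.lintegral_compProd hf]; rfl

lemma integral_refP (ρ0 : ProbabilityMeasure Ω) {ζ : Ω → ProbabilityMeasure Ω}
    (hζ : Continuous ζ) {f : Ω × Ω → ℝ} (hf : Integrable f (refP ρ0 ζ hζ : Measure (Ω × Ω))) :
    ∫ z, f z ∂(refP ρ0 ζ hζ : Measure (Ω × Ω)) =
      ∫ a, ∫ b, f (a, b) ∂(ζ a : Measure Ω) ∂(ρ0 : Measure Ω) := by
  rw [refP_coe] at *
  rw [Measure.integral_compProd hf]; rfl

lemma refP_fst (ρ0 : ProbabilityMeasure Ω) {ζ : Ω → ProbabilityMeasure Ω} (hζ : Continuous ζ) :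
    (refP ρ0 ζ hζ : Measure (Ω × Ω)).map Prod.fst = ρ0 := by
  rw [refP_coe]
  exact Measure.fst_compProd _ _

/-- Averaged initial law statement: convergence of initial data. -/
def InitConv (ρ0 : ProbabilityMeasure Ω) (x : (n : ℕ) → Fin n → Ω) : Prop :=
  ∀ f : BoundedContinuousFunction Ω ℝ,
    Tendsto (fun n : ℕ => (n : ℝ)⁻¹ * ∑ i, f (x n i)) atTop (𝓝 (∫ a, f a ∂(ρ0 : Measure Ω)))

lemma bcf_bound {X : Type*} [TopologicalSpace X] [MeasurableSpace X] [OpensMeasurableSpace X]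
    {g : X → ℝ} (ν : Measure X) [IsFiniteMeasure ν]
    (hg : Measurable g) {C : ℝ} (hC : ∀ z, |g z| ≤ C) : Integrable g ν :=
  Integrable.of_bound hg.aestronglyMeasurable C (Eventually.of_forall fun z => by
    simpa using hC z)

/-- `a ↦ ∫ F(a,b) ζ^a(db)` as a bounded continuous function. -/
def fibB {ζ : Ω → ProbabilityMeasure Ω} (hζ : Continuous ζ)
    (F : BoundedContinuousFunction (Ω × Ω) ℝ) : BoundedContinuousFunction Ω ℝ :=
  BoundedContinuousFunction.ofNormedAddCommGroup
    (fun a => ∫ b, F (a, b) ∂(ζ a : Measure Ω)) (continuous_fibInt hζ F) ‖F‖ (fun a => by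
      have := norm_integral_le_of_norm_le_const (μ := (ζ a : Measure Ω)) (f := fun b => F (a, b))
        (C := ‖F‖) (Eventually.of_forall fun b => F.norm_coe_le_norm _)
      simpa using this)

lemma tendsto_avg_fib [Nonempty Ω] {ρ0 : ProbabilityMeasure Ω} {x : (n : ℕ) → Fin n → Ω}
    (hx : InitConv ρ0 x) {ζ : Ω → ProbabilityMeasure Ω} (hζ : Continuous ζ) :
    Tendsto (fun n => avgP n fun i => fib ζ (x n i)) atTop (𝓝 (refP ρ0 ζ hζ)) := by
  rw [ProbabilityMeasure.tendsto_iff_forall_integral_tendsto]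
  intro F
  rw [integral_refP ρ0 hζ (F.integrable _)]
  refine (hx (fibB hζ F)).congr' ?_
  filter_upwards [eventually_ne_atTop 0] with n hn
  rw [integral_avgP hn _ (fun i => F.integrable _)]
  congr 1
  refine Finset.sum_congr rfl fun i _ => ?_
  rw [integral_fib _ _ F.continuous.measurable]; rfl

/-- `e^F` as a bounded continuous function. -/
def expB {X : Type*} [TopologicalSpace X] (F : BoundedContinuousFunction X ℝ) :
    BoundedContinuousFunction X ℝ :=
  BoundedContinuousFunction.ofNormedAddCommGroup (fun z => Real.exp (F z))
    (Real.continuous_exp.comp F.continuous) (Real.exp ‖F‖) (fun z => by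
      rw [Real.norm_eq_abs, abs_of_pos (Real.exp_pos _)]
      exact Real.exp_le_exp.2 ((le_abs_self _).trans (F.norm_coe_le_norm z)))

lemma expB_apply {X : Type*} [TopologicalSpace X] (F : BoundedContinuousFunction X ℝ) (z : X) :
    expB F z = Real.exp (F z) := rfl

lemma fibB_apply {ζ : Ω → ProbabilityMeasure Ω} (hζ : Continuous ζ)
    (F : BoundedContinuousFunction (Ω × Ω) ℝ) (a : Ω) :
    fibB hζ F a = ∫ b, F (a, b) ∂(ζ a : Measure Ω) := rfl

lemma fib_integrable {ζ : Ω → ProbabilityMeasure Ω}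
    (F : BoundedContinuousFunction (Ω × Ω) ℝ) (a c : Ω) :
    Integrable (fun b => F (a, b)) (ζ c : Measure Ω) :=
  (F.compContinuous ⟨fun b => (a, b), by fun_prop⟩).integrable _

lemma expB_fib_bounds {ζ : Ω → ProbabilityMeasure Ω} (hζ : Continuous ζ)
    (F : BoundedContinuousFunction (Ω × Ω) ℝ) (a : Ω) :
    Real.exp (-‖F‖) ≤ fibB hζ (expB F) a ∧ fibB hζ (expB F) a ≤ Real.exp ‖F‖ := by
  rw [fibB_apply]
  have hb : ∀ z, -‖F‖ ≤ F z ∧ F z ≤ ‖F‖ := fun z => abs_le.1 (F.norm_coe_le_norm z)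
  constructor
  · have := integral_mono (μ := (ζ a : Measure Ω)) (integrable_const (Real.exp (-‖F‖)))
      (fib_integrable (ζ := ζ) (expB F) a a) (fun b => Real.exp_le_exp.2 (hb (a, b)).1)
    simpa using this
  · have := integral_mono (μ := (ζ a : Measure Ω)) (fib_integrable (ζ := ζ) (expB F) a a)
      (integrable_const (Real.exp (‖F‖)))
      (fun b => Real.exp_le_exp.2 (hb (a, b)).2)
    simpa using this

/-- `a ↦ log ∫ e^{F(a,b)} ζ^a(db)`. -/
def lamB {ζ : Ω → ProbabilityMeasure Ω} (hζ : Continuous ζ)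
    (F : BoundedContinuousFunction (Ω × Ω) ℝ) : BoundedContinuousFunction Ω ℝ :=
  BoundedContinuousFunction.ofNormedAddCommGroup
    (fun a => Real.log (fibB hζ (expB F) a))
    ((fibB hζ (expB F)).continuous.log fun a =>
      ((Real.exp_pos _).trans_le (expB_fib_bounds hζ F a).1).ne') ‖F‖ (fun a => by
      have h := expB_fib_bounds hζ F a
      have hp := (Real.exp_pos _).trans_le h.1
      rw [Real.norm_eq_abs, abs_le]
      exact ⟨(Real.le_log_iff_exp_le hp).2 h.1, (Real.log_le_iff_le_exp hp).2 h.2⟩)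

lemma exp_lamB {ζ : Ω → ProbabilityMeasure Ω} (hζ : Continuous ζ)
    (F : BoundedContinuousFunction (Ω × Ω) ℝ) (a : Ω) :
    Real.exp (lamB hζ F a) = ∫ b, Real.exp (F (a, b)) ∂(ζ a : Measure Ω) := by
  change Real.exp (Real.log (fibB hζ (expB F) a)) = _
  rw [Real.exp_log ((Real.exp_pos _).trans_le (expB_fib_bounds hζ F a).1)]
  rfl

lemma lintegral_exp_fib {ζ : Ω → ProbabilityMeasure Ω} (hζ : Continuous ζ)
    (F : BoundedContinuousFunction (Ω × Ω) ℝ) (a : Ω) :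
    ∫⁻ b, ENNReal.ofReal (Real.exp (F (a, b))) ∂(ζ a : Measure Ω) =
      ENNReal.ofReal (Real.exp (lamB hζ F a)) := by
  have hi : Integrable (fun b => Real.exp (F (a, b))) (ζ a : Measure Ω) :=
    fib_integrable (ζ := ζ) (expB F) a a
  rw [exp_lamB, ofReal_integral_eq_lintegral_ofReal hi
    (Eventually.of_forall fun b => (Real.exp_pos _).le)]

/-- The law of the particles. -/
def piM (ζ : Ω → ProbabilityMeasure Ω) {n : ℕ} (x : Fin n → Ω) : Measure (Fin n → Ω) :=
  Measure.pi fun i => (ζ (x i) : Measure Ω)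

instance piM_prob (ζ : Ω → ProbabilityMeasure Ω) {n : ℕ} (x : Fin n → Ω) :
    IsProbabilityMeasure (piM ζ x) := by unfold piM; infer_instance

/-- pair empirical measure -/
def pairE [Nonempty Ω] {n : ℕ} (x y : Fin n → Ω) : ProbabilityMeasure (Ω × Ω) :=
  empP n fun i => (x i, y i)

lemma chernoff_pair [Nonempty Ω] {ζ : Ω → ProbabilityMeasure Ω} (hζ : Continuous ζ)
    (F : BoundedContinuousFunction (Ω × Ω) ℝ) {n : ℕ} (hn : n ≠ 0) (x : Fin n → Ω) (c : ℝ) :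
    piM ζ x {y | c ≤ ∫ z, F z ∂(pairE x y : Measure (Ω × Ω))} ≤
      ENNReal.ofReal (Real.exp (-(n * (c - (n : ℝ)⁻¹ * ∑ i, lamB hζ F (x i))))) := by
  have hn' : (0 : ℝ) < n := by positivity
  have h := chernoff (fun i => (ζ (x i) : Measure Ω)) (fun i b => F (x i, b))
    (fun i => F.continuous.measurable.comp measurable_prodMk_left) (n * c)
  simp_rw [lintegral_exp_fib hζ F] at h
  rw [← ENNReal.ofReal_prod_of_nonneg (fun i _ => (Real.exp_pos _).le), ← Real.exp_sum,
    ← ENNReal.ofReal_mul (Real.exp_pos _).le, ← Real.exp_add] at h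
  have e1 : {y : Fin n → Ω | c ≤ ∫ z, F z ∂(pairE x y : Measure (Ω × Ω))} =
      {y | n * c ≤ ∑ i, F (x i, y i)} := by
    ext y
    simp only [mem_ofPred_eq, pairE]
    rw [integral_empP hn _ F.continuous.measurable, inv_mul_eq_div, le_div_iff₀ hn', mul_comm]
  rw [e1]
  refine h.trans_eq ?_
  congr 2
  field_simp
  ring

end fib

end

section
set_option linter.unusedSectionVars false


/-! ### Part 3: entropy -/

section entropy
open InformationTheory

lemma relEnt_eq_klDiv {X : Type*} [MeasurableSpace X] (q p : Measure X)
    [IsProbabilityMeasure q] [IsProbabilityMeasure p] : relEntNN q p = klDiv q p := by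
  unfold relEntNN
  rw [klDiv_def]
  simp only [probReal_univ, add_sub_cancel_right]
  rfl

lemma young_klFun {g : ℝ} (hg : 0 ≤ g) (F : ℝ) : g * F - (Real.exp F - 1) ≤ klFun g := by
  unfold klFun
  rcases hg.eq_or_lt with rfl | h
  · have := Real.exp_pos F
    simp; linarith
  · have h1 := Real.log_le_sub_one_of_pos (div_pos (Real.exp_pos F) h)
    rw [Real.log_div (Real.exp_pos F).ne' h.ne', Real.log_exp] at h1
    have h2 := mul_le_mul_of_nonneg_left h1 hg
    have h3 : g * (Real.exp F / g - 1) = Real.exp F - g := by field_simp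
    rw [h3] at h2
    nlinarith

lemma integrable_expF {X : Type*} [MeasurableSpace X] (p : Measure X)
    [IsProbabilityMeasure p] {F : X → ℝ} (hF : Measurable F) {M : ℝ} (hM : ∀ z, |F z| ≤ M) :
    Integrable (fun z => Real.exp (F z)) p :=
  Integrable.of_bound (Real.measurable_exp.comp hF).aestronglyMeasurable (Real.exp M)
    (Eventually.of_forall fun z => by
      rw [Real.norm_eq_abs, abs_of_pos (Real.exp_pos _)]
      exact Real.exp_le_exp.2 ((le_abs_self _).trans (hM z)))

lemma integrable_bddF {X : Type*} [MeasurableSpace X] (p : Measure X)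
    [IsProbabilityMeasure p] {F : X → ℝ} (hF : Measurable F) {M : ℝ} (hM : ∀ z, |F z| ≤ M) :
    Integrable F p :=
  Integrable.of_bound hF.aestronglyMeasurable M (Eventually.of_forall fun z => hM z)

lemma easyDV {X : Type*} [MeasurableSpace X] (q p : Measure X)
    [IsProbabilityMeasure q] [IsProbabilityMeasure p] (h : relEntNN q p ≠ ⊤)
    {F : X → ℝ} (hF : Measurable F) {M : ℝ} (hM : ∀ z, |F z| ≤ M) :
    ∫ z, F z ∂q - ∫ z, (Real.exp (F z) - 1) ∂p ≤ (relEntNN q p).toReal := by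
  rw [relEnt_eq_klDiv] at *
  obtain ⟨hac, hi⟩ := klDiv_ne_top_iff.1 h
  rw [toReal_klDiv_eq_integral_klFun hac]
  rw [← integrable_klFun_rnDeriv_iff hac] at hi
  have h1 := (integrable_rnDeriv_smul_iff hac).2 (integrable_bddF q hF hM)
  have h2 : Integrable (fun z => Real.exp (F z) - 1) p :=
    (integrable_expF p hF hM).sub (integrable_const _)
  rw [← integral_rnDeriv_smul hac, ← integral_sub h1 h2]
  exact integral_mono (h1.sub h2) hi fun z => young_klFun ENNReal.toReal_nonneg _

lemma exists_bcf_approx {X : Type*} [MetricSpace X] [MeasurableSpace X] [BorelSpace X]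
    (ν : Measure X) [IsFiniteMeasure ν] {F : X → ℝ} (hF : Measurable F) {M : ℝ}
    (hM : ∀ z, |F z| ≤ M) :
    ∃ f : ℕ → BoundedContinuousFunction X ℝ, (∀ j z, |f j z| ≤ M) ∧
      ∀ᵐ z ∂ν, Tendsto (fun j => f j z) atTop (𝓝 (F z)) := by
  have hmem : MemLp F 1 ν := MemLp.of_bound hF.aestronglyMeasurable M
    (Eventually.of_forall fun z => hM z)
  have hε : ∀ j : ℕ, ((j : ℝ≥0∞) + 1)⁻¹ ≠ 0 := fun j =>
    ENNReal.inv_ne_zero.2 (by simp)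
  choose g hg hgm using fun j : ℕ =>
    hmem.exists_boundedContinuous_eLpNorm_sub_le ENNReal.one_ne_top (hε j)
  by_cases hX : Nonempty X
  swap
  · refine ⟨fun _ => 0, fun j z => (hX ⟨z⟩).elim, Eventually.of_forall fun z => (hX ⟨z⟩).elim⟩
  have hM0 : 0 ≤ M := (abs_nonneg _).trans (hM (Classical.arbitrary X))
  let c : ℝ → ℝ := fun t => max (-M) (min t M)
  have hc : Continuous c := by fun_prop
  have hcM : ∀ t, |c t| ≤ M := fun t => by
    rw [abs_le]; exact ⟨le_max_left _ _, max_le (by linarith) (min_le_right _ _)⟩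
  have hcid : ∀ t, |t| ≤ M → c t = t := fun t ht => by
    rw [abs_le] at ht
    simp only [c]
    rw [min_eq_left ht.2, max_eq_right ht.1]
  have hclip : ∀ s t, |c s - c t| ≤ |s - t| := fun s t => by
    simp only [c]
    refine (abs_max_sub_max_le_abs _ _ (-M)).trans' ?_ |>.trans (abs_min_sub_min_le_max s M t M |>.trans (by simp))
    rw [max_comm, max_comm (-M)]
  have hlim : Tendsto (fun j => eLpNorm ((fun z => g j z) - F) 1 ν) atTop (𝓝 0) := by
    have h0 : Tendsto (fun j : ℕ => ((j : ℝ≥0∞) + 1)⁻¹) atTop (𝓝 0) := by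
      have := (tendsto_add_atTop_iff_nat 1).2 ENNReal.tendsto_inv_nat_nhds_zero
      simpa using this
    refine tendsto_of_tendsto_of_tendsto_of_le_of_le tendsto_const_nhds h0
      (fun _ => bot_le) fun j => ?_
    rw [eLpNorm_sub_comm]
    exact hg j
  obtain ⟨ns, -, hns⟩ := (tendstoInMeasure_of_tendsto_eLpNorm one_ne_zero
    (fun j => (g j).continuous.measurable.aestronglyMeasurable)
    hF.aestronglyMeasurable hlim).exists_seq_tendsto_ae
  refine ⟨fun j => BoundedContinuousFunction.ofNormedAddCommGroup (fun z => c (g (ns j) z))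
    (hc.comp (g (ns j)).continuous) M (fun z => hcM _), fun j z => hcM _, ?_⟩
  filter_upwards [hns] with z hz
  have := (hc.tendsto _).comp hz
  rw [hcid _ (hM z)] at this
  exact this

lemma dvExtend {X : Type*} [MetricSpace X] [MeasurableSpace X] [BorelSpace X]
    (q p : Measure X) [IsProbabilityMeasure q] [IsProbabilityMeasure p] {c : ℝ}
    (h : ∀ f : BoundedContinuousFunction X ℝ,
      ∫ z, f z ∂q - ∫ z, (Real.exp (f z) - 1) ∂p ≤ c)
    {F : X → ℝ} (hF : Measurable F) {M : ℝ} (hM : ∀ z, |F z| ≤ M) :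
    ∫ z, F z ∂q - ∫ z, (Real.exp (F z) - 1) ∂p ≤ c := by
  obtain ⟨f, hf, hlim⟩ := exists_bcf_approx (p + q) hF hM
  rw [ae_add_measure_iff] at hlim
  have h1 : Tendsto (fun j => ∫ z, f j z ∂q) atTop (𝓝 (∫ z, F z ∂q)) :=
    tendsto_integral_of_dominated_convergence (fun _ => M)
      (fun j => (f j).continuous.measurable.aestronglyMeasurable) (integrable_const _)
      (fun j => Eventually.of_forall fun z => hf j z) hlim.2
  have h2 : Tendsto (fun j => ∫ z, (Real.exp (f j z) - 1) ∂p) atTop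
      (𝓝 (∫ z, (Real.exp (F z) - 1) ∂p)) := by
    refine tendsto_integral_of_dominated_convergence (fun _ => Real.exp M + 1)
      (fun j => ((Real.continuous_exp.comp (f j).continuous).sub
        continuous_const).measurable.aestronglyMeasurable) (integrable_const _)
      (fun j => Eventually.of_forall fun z => ?_) ?_
    · refine (norm_sub_le _ _).trans ?_
      rw [Real.norm_eq_abs, abs_of_pos (Real.exp_pos _)]
      simp only [norm_one, add_le_add_iff_right, Real.exp_le_exp]
      exact (le_abs_self _).trans (hf j z)
    · filter_upwards [hlim.1] with z hz
      exact ((Real.continuous_exp.tendsto _).comp hz).sub_const 1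
  exact le_of_tendsto' (h1.sub h2) fun j => h (f j)

lemma hardDV {X : Type*} [MetricSpace X] [MeasurableSpace X] [BorelSpace X]
    (q p : Measure X) [IsProbabilityMeasure q] [IsProbabilityMeasure p] {c : ℝ}
    (h : ∀ f : BoundedContinuousFunction X ℝ,
      ∫ z, f z ∂q - ∫ z, (Real.exp (f z) - 1) ∂p ≤ c) :
    relEntNN q p ≤ ENNReal.ofReal c := by
  have hac : q ≪ p := by
    refine Measure.AbsolutelyContinuous.mk fun A hA hpA => ?_
    by_contra hq
    have hq' : 0 < q.real A := ENNReal.toReal_pos hq (measure_ne_top _ _)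
    obtain ⟨k, hk⟩ := exists_nat_gt (c / q.real A)
    have := dvExtend q p h (F := A.indicator fun _ => (k : ℝ)) (measurable_const.indicator hA)
      (M := k) (fun z => by by_cases hz : z ∈ A <;> simp [hz])
    have e : ∫ z, (Real.exp (A.indicator (fun _ => (k : ℝ)) z) - 1) ∂p = 0 := by
      refine integral_eq_zero_of_ae ?_
      have : ∀ᵐ z ∂p, z ∉ A := measure_eq_zero_iff_ae_notMem.1 hpA
      filter_upwards [this] with z hz
      simp [hz]
    rw [e, integral_indicator_const _ hA, sub_zero, smul_eq_mul] at this
    rw [div_lt_iff₀ hq'] at hk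
    linarith
  rw [relEnt_eq_klDiv, klDiv_eq_lintegral_klFun_of_ac hac]
  set g : X → ℝ := fun z => (q.rnDeriv p z).toReal with hgdef
  have hgm : Measurable g := (Measure.measurable_rnDeriv q p).ennreal_toReal
  have hg0 : ∀ z, 0 ≤ g z := fun z => ENNReal.toReal_nonneg
  let a : ℕ → X → ℝ := fun k z => max ((k : ℝ) + 1)⁻¹ (min (g z) (k + 1))
  have hk1 : ∀ k : ℕ, (1 : ℝ) ≤ (k : ℝ) + 1 := fun k => by
    have : (0 : ℝ) ≤ k := Nat.cast_nonneg k
    linarith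
  have hk0 : ∀ k : ℕ, (0 : ℝ) < ((k : ℝ) + 1)⁻¹ := fun k => by positivity
  have hkk : ∀ k : ℕ, ((k : ℝ) + 1)⁻¹ ≤ (k : ℝ) + 1 := fun k =>
    (inv_le_one_of_one_le₀ (hk1 k)).trans (hk1 k)
  have ha0 : ∀ (k : ℕ) z, 0 < a k z := fun k z => (hk0 k).trans_le (le_max_left _ _)
  have hal : ∀ (k : ℕ) z, ((k : ℝ) + 1)⁻¹ ≤ a k z := fun k z => le_max_left _ _
  have hau : ∀ (k : ℕ) z, a k z ≤ (k : ℝ) + 1 := fun k z => max_le (hkk k) (min_le_right _ _)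
  have ham : ∀ k, Measurable (a k) := fun k =>
    measurable_const.max (hgm.min measurable_const)
  have hFm : ∀ k, Measurable fun z => Real.log (a k z) := fun k =>
    Real.measurable_log.comp (ham k)
  have hFb : ∀ (k : ℕ) z, |Real.log (a k z)| ≤ Real.log ((k : ℝ) + 1) := fun k z => by
    rw [abs_le]
    constructor
    · rw [← Real.log_inv]
      exact Real.log_le_log (hk0 k) (hal k z)
    · exact Real.log_le_log (ha0 k z) (hau k z)
  -- integrand
  have hnn : ∀ (k : ℕ) z, 0 ≤ g z * Real.log (a k z) - (Real.exp (Real.log (a k z)) - 1) := by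
    intro k z
    rw [Real.exp_log (ha0 k z)]
    have hkl : 0 ≤ klFun (a k z) := klFun_nonneg (ha0 k z).le
    unfold klFun at hkl
    have : 0 ≤ (g z - a k z) * Real.log (a k z) := by
      rcases le_total (g z) ((k : ℝ) + 1)⁻¹ with h1 | h1
      · have : a k z = ((k : ℝ) + 1)⁻¹ := max_eq_left ((min_le_left _ _).trans h1)
        rw [this]
        exact mul_nonneg_of_nonpos_of_nonpos (by linarith)
          (Real.log_nonpos (hk0 k).le (inv_le_one_of_one_le₀ (hk1 k)))
      · rcases le_total (g z) (k + 1) with h2 | h2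
        · have : a k z = g z := by
            simp only [a]; rw [min_eq_left h2, max_eq_right h1]
          simp [this]
        · have : a k z = k + 1 := by
            simp only [a]; rw [min_eq_right h2, max_eq_right (hkk k)]
          rw [this]
          exact mul_nonneg (by linarith) (Real.log_nonneg (hk1 k))
    nlinarith
  have hint : ∀ k, ∫⁻ z, ENNReal.ofReal
      (g z * Real.log (a k z) - (Real.exp (Real.log (a k z)) - 1)) ∂p ≤ ENNReal.ofReal c := by
    intro k
    have h1 : Integrable (fun z => g z * Real.log (a k z)) p :=
      (integrable_rnDeriv_smul_iff hac).2 (integrable_bddF q (hFm k) (hFb k))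
    have h2 : Integrable (fun z => Real.exp (Real.log (a k z)) - 1) p :=
      (integrable_expF p (hFm k) (hFb k)).sub (integrable_const _)
    have h4 := ofReal_integral_eq_lintegral_ofReal (h1.sub h2)
      (Eventually.of_forall fun z => hnn k z)
    refine h4.symm.le.trans ?_
    refine ENNReal.ofReal_le_ofReal ?_
    have h3 := dvExtend q p h (hFm k) (hFb k)
    rw [← integral_rnDeriv_smul hac] at h3
    rw [integral_sub' h1 h2]
    exact h3
  calc ∫⁻ z, ENNReal.ofReal (klFun (g z)) ∂p
      ≤ ∫⁻ z, liminf (fun k => ENNReal.ofReal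
        (g z * Real.log (a k z) - (Real.exp (Real.log (a k z)) - 1))) atTop ∂p := by
        refine lintegral_mono fun z => ?_
        have : Tendsto (fun k => ENNReal.ofReal
            (g z * Real.log (a k z) - (Real.exp (Real.log (a k z)) - 1))) atTop
            (𝓝 (ENNReal.ofReal (klFun (g z)))) := by
          refine (ENNReal.continuous_ofReal.tendsto _).comp ?_
          have hinv : Tendsto (fun k : ℕ => ((k : ℝ) + 1)⁻¹) atTop (𝓝 0) := by
            simpa [one_div] using tendsto_one_div_add_atTop_nhds_zero_nat (𝕜 := ℝ)
          rcases (hg0 z).eq_or_lt with h0 | h0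
          · have : ∀ k, a k z = ((k : ℝ) + 1)⁻¹ := fun k =>
              max_eq_left ((min_le_left _ _).trans (by rw [← h0]; exact (hk0 k).le))
            simp_rw [this, ← h0]
            simp only [zero_mul, Real.exp_log (hk0 _), klFun_zero]
            have := (tendsto_const_nhds (x := (0 : ℝ))).sub (hinv.sub_const 1)
            simpa using this
          · refine tendsto_const_nhds.congr' ?_
            obtain ⟨N, hN⟩ := exists_nat_gt (g z)
            filter_upwards [hinv.eventually_lt_const h0, eventually_ge_atTop N] with k hk hkN
            have h2 : g z ≤ k + 1 := by
              have : (N : ℝ) ≤ k := by exact_mod_cast hkN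
              linarith
            have : a k z = g z := by
              simp only [a]; rw [min_eq_left h2, max_eq_right hk.le]
            rw [this, Real.exp_log h0]
            unfold klFun; ring
        exact this.liminf_eq.ge
    _ ≤ liminf (fun k => ∫⁻ z, ENNReal.ofReal
        (g z * Real.log (a k z) - (Real.exp (Real.log (a k z)) - 1)) ∂p) atTop := by
        refine lintegral_liminf_le fun k => ?_
        exact (((hgm.mul (hFm k)).sub ((Real.measurable_exp.comp (hFm k)).sub
          measurable_const))).ennreal_ofReal
    _ ≤ ENNReal.ofReal c := by
        refine liminf_le_of_frequently_le' (Eventually.frequently (Eventually.of_forall hint))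

end entropy

end

section
set_option linter.unusedSectionVars false



/-! ### Part 4: upper bound and goodness -/

section gen

lemma log_ofReal_exp (t : ℝ) : ENNReal.log (ENNReal.ofReal (Real.exp t)) = (t : EReal) := by
  rw [ENNReal.log_ofReal_of_pos (Real.exp_pos t), Real.log_exp]

lemma scaled_tendsto (c b : ℝ) :
    Tendsto (fun n : ℕ => (((n : ℝ)⁻¹ : ℝ) : EReal) *
      ENNReal.log (ENNReal.ofReal (Real.exp (c - n * b)))) atTop (𝓝 ((-b : ℝ) : EReal)) := by
  have h : Tendsto (fun n : ℕ => (n : ℝ)⁻¹ * c - b) atTop (𝓝 (0 * c - b)) :=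
    ((tendsto_inv_atTop_nhds_zero_nat (𝕜 := ℝ)).mul_const c).sub_const b
  rw [zero_mul, zero_sub] at h
  refine ((continuous_coe_real_ereal.tendsto _).comp h).congr' ?_
  filter_upwards [eventually_ne_atTop 0] with n hn
  rw [log_ofReal_exp]
  have hn' : (n : ℝ) ≠ 0 := by exact_mod_cast hn
  simp only [Function.comp]
  rw [← EReal.coe_mul]
  congr 1
  field_simp

lemma limsup_log_le {m : ℕ → ℝ≥0∞} {c b : ℝ}
    (h : ∀ᶠ n : ℕ in atTop, m n ≤ ENNReal.ofReal (Real.exp (c - n * b))) :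
    limsup (fun n : ℕ => (((n : ℝ)⁻¹ : ℝ) : EReal) * ENNReal.log (m n)) atTop ≤
      ((-b : ℝ) : EReal) := by
  rw [← (scaled_tendsto c b).limsup_eq]
  refine limsup_le_limsup ?_
  filter_upwards [h] with n hn
  exact mul_le_mul_of_nonneg_left (ENNReal.log_monotone hn)
    (EReal.coe_nonneg.2 (by positivity))

lemma le_liminf_log {m : ℕ → ℝ≥0∞} {c b : ℝ}
    (h : ∀ᶠ n : ℕ in atTop, ENNReal.ofReal (Real.exp (c - n * b)) ≤ m n) :
    ((-b : ℝ) : EReal) ≤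
      liminf (fun n : ℕ => (((n : ℝ)⁻¹ : ℝ) : EReal) * ENNReal.log (m n)) atTop := by
  rw [← (scaled_tendsto c b).liminf_eq]
  refine liminf_le_liminf ?_
  filter_upwards [h] with n hn
  exact mul_le_mul_of_nonneg_left (ENNReal.log_monotone hn)
    (EReal.coe_nonneg.2 (by positivity))

lemma absorb_const {C : ℝ≥0∞} (hC : C ≠ ⊤) : ∃ c : ℝ, ∀ t : ℝ,
    C * ENNReal.ofReal (Real.exp t) ≤ ENNReal.ofReal (Real.exp (c + t)) := by
  refine ⟨Real.log (C.toReal + 1), fun t => ?_⟩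
  have : (0 : ℝ) < C.toReal + 1 := by positivity
  rw [Real.exp_add, Real.exp_log this, ENNReal.ofReal_mul this.le]
  gcongr
  rw [ENNReal.ofReal_add (by positivity) zero_le_one, ENNReal.ofReal_toReal hC]
  exact le_self_add

lemma isCompact_tightSet {X : Type*} [MetricSpace X] [TopologicalSpace.SeparableSpace X]
    [MeasurableSpace X] [BorelSpace X] (K : ℕ → Set X) (hK : ∀ m, IsCompact (K m)) :
    IsCompact {q : ProbabilityMeasure X | ∀ m : ℕ, (q : Measure X) (K m)ᶜ ≤ ((m : ℝ≥0∞) + 1)⁻¹} := by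
  have h0 : Tendsto (fun j : ℕ => ((j : ℝ≥0) + 1)⁻¹) atTop (𝓝 0) := by
    simpa [one_div] using tendsto_one_div_add_atTop_nhds_zero_nat (𝕜 := ℝ≥0)
  convert isCompact_setOfPred_probabilityMeasure_mass_eq_compl_isCompact_le h0 hK
    (Or.inl inferInstance) using 3 with q
  refine forall_congr' fun m => ?_
  rw [← ProbabilityMeasure.ennreal_coeFn_eq_coeFn_toMeasure, ← ENNReal.coe_le_coe,
    ENNReal.coe_inv (by positivity)]
  simp

end gen

section upper

variable {Ω : Type*} [MetricSpace Ω] [TopologicalSpace.SeparableSpace Ω]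
    [MeasurableSpace Ω] [BorelSpace Ω]

lemma fst_eq_of_var {ρ0 : ProbabilityMeasure Ω} {ζ : Ω → ProbabilityMeasure Ω}
    (hζ : Continuous ζ) (q : ProbabilityMeasure (Ω × Ω)) {a : ℝ}
    (h : ∀ F : BoundedContinuousFunction (Ω × Ω) ℝ,
      ∫ z, F z ∂(q : Measure (Ω × Ω)) - ∫ z, lamB hζ F z ∂(ρ0 : Measure Ω) ≤ a) :
    (q : Measure (Ω × Ω)).map Prod.fst = ρ0 := by
  have : IsProbabilityMeasure ((q : Measure (Ω × Ω)).map Prod.fst) :=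
    Measure.isProbabilityMeasure_map measurable_fst.aemeasurable
  refine ext_of_forall_integral_eq_of_IsFiniteMeasure fun f => ?_
  rw [integral_map measurable_fst.aemeasurable f.continuous.measurable.aestronglyMeasurable]
  have key : ∀ t : ℝ, t * (∫ z, f z.1 ∂(q : Measure (Ω × Ω)) - ∫ z, f z ∂(ρ0 : Measure Ω)) ≤ a := by
    intro t
    have h1 := h (t • f.compContinuous ⟨Prod.fst, continuous_fst⟩)
    have h2 : ∀ a, lamB hζ (t • f.compContinuous ⟨Prod.fst, continuous_fst⟩) a = t * f a := by
      intro a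
      apply Real.exp_injective
      rw [exp_lamB]
      simp
    simp_rw [h2] at h1
    simp only [BoundedContinuousFunction.coe_smul, BoundedContinuousFunction.compContinuous_apply,
      ContinuousMap.coe_mk, smul_eq_mul, integral_const_mul] at h1
    linarith
  by_contra hne
  set d := ∫ z, f z.1 ∂(q : Measure (Ω × Ω)) - ∫ z, f z ∂(ρ0 : Measure Ω) with hd
  have hd0 : d ≠ 0 := sub_ne_zero.2 hne
  have := key ((a + 1) / d)
  rw [div_mul_cancel₀ _ hd0] at this
  linarith

lemma ent_le_of_var {ρ0 : ProbabilityMeasure Ω} {ζ : Ω → ProbabilityMeasure Ω}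
    (hζ : Continuous ζ) (q : ProbabilityMeasure (Ω × Ω)) {a : ℝ}
    (h : ∀ F : BoundedContinuousFunction (Ω × Ω) ℝ,
      ∫ z, F z ∂(q : Measure (Ω × Ω)) - ∫ z, lamB hζ F z ∂(ρ0 : Measure Ω) ≤ a) :
    relEntNN (q : Measure (Ω × Ω)) (refP ρ0 ζ hζ) ≤ ENNReal.ofReal a := by
  refine hardDV _ _ fun F => (sub_le_sub_left ?_ _).trans (h F)
  have hi : Integrable (fun z => Real.exp (F z)) (refP ρ0 ζ hζ : Measure (Ω × Ω)) :=
    (expB F).integrable _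
  rw [integral_sub hi (integrable_const _), integral_refP ρ0 hζ hi]
  simp_rw [← exp_lamB hζ F]
  have hi2 : Integrable (fun a => Real.exp (lamB hζ F a)) (ρ0 : Measure Ω) :=
    (expB (lamB hζ F)).integrable _
  simp only [integral_const, probReal_univ, smul_eq_mul, mul_one]
  have := integral_mono ((lamB hζ F).integrable (ρ0 : Measure Ω)) (hi2.sub (integrable_const 1))
    (fun a => by
      have := Real.add_one_le_exp (lamB hζ F a)
      simp only [Pi.sub_apply]; linarith)
  rw [integral_sub' hi2 (integrable_const _)] at this
  simpa using this

lemma exp_tight_aux {n : ℕ} (ν : Fin n → Measure Ω) [∀ i, IsProbabilityMeasure (ν i)]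
    (A : Fin n → Set Ω) (hA : ∀ i, MeasurableSet (A i)) (l c : ℝ) :
    (Measure.pi ν) {y | c ≤ ∑ i, (A i).indicator (fun _ => l) (y i)} ≤
      ENNReal.ofReal (Real.exp (-c + Real.exp l * ∑ i, (ν i).real (A i))) := by
  refine (chernoff ν (fun i => (A i).indicator fun _ => l)
    (fun i => measurable_const.indicator (hA i)) c).trans ?_
  rw [Real.exp_add, ENNReal.ofReal_mul (Real.exp_pos _).le]
  gcongr
  rw [Finset.mul_sum, Real.exp_sum, ENNReal.ofReal_prod_of_nonneg (fun i _ => (Real.exp_pos _).le)]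
  refine Finset.prod_le_prod' fun i _ => ?_
  have h1 : ∀ y, ENNReal.ofReal (Real.exp ((A i).indicator (fun _ => l) y)) ≤
      1 + (A i).indicator (fun _ => ENNReal.ofReal (Real.exp l)) y := by
    intro y
    by_cases hy : y ∈ A i <;> simp [hy]
  refine (lintegral_mono h1).trans ?_
  rw [lintegral_add_left measurable_const, lintegral_indicator_const (hA i)]
  simp only [lintegral_const, measure_univ, mul_one]
  rw [← ENNReal.ofReal_one, ← ofReal_measureReal, ← ENNReal.ofReal_mul (Real.exp_pos _).le,
    ← ENNReal.ofReal_add zero_le_one (by positivity)]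
  refine ENNReal.ofReal_le_ofReal ?_
  have := Real.add_one_le_exp (Real.exp l * (ν i).real (A i))
  linarith

lemma exp_tight [Nonempty Ω] (hT : ∀ ν : Measure Ω, IsProbabilityMeasure ν → ∀ ε : ℝ≥0∞, ε ≠ 0 →
      ∃ K, IsCompact K ∧ ν Kᶜ ≤ ε)
    {ρ0 : ProbabilityMeasure Ω} {x : (n : ℕ) → Fin n → Ω}
    (hx : InitConv ρ0 x) {ζ : Ω → ProbabilityMeasure Ω} (hζ : Continuous ζ) (a : ℝ) (ha : 0 ≤ a) :
    ∃ 𝒦 : Set (ProbabilityMeasure (Ω × Ω)), IsCompact 𝒦 ∧ ∃ c : ℝ, ∀ n : ℕ, n ≠ 0 →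
      piM ζ (x n) {y | pairE (x n) y ∉ 𝒦} ≤ ENNReal.ofReal (Real.exp (c - n * a)) := by
  let lam : ℕ → ℝ := fun m => ((m : ℝ) + 1) * (a + m + 2)
  choose K hK hKn using fun m : ℕ => lecam (tight_prod hT) _ _ (tendsto_avg_fib hx hζ)
    (ENNReal.ofReal (Real.exp (-lam m))) (by simp [Real.exp_pos])
  have hsum : Summable fun m : ℕ => Real.exp (-(m : ℝ)) := Real.summable_exp_neg_nat
  have hS : (∑' m : ℕ, ENNReal.ofReal (Real.exp (-(m : ℝ)))) ≠ ⊤ := hsum.tsum_ofReal_ne_top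
  obtain ⟨c, hc⟩ := absorb_const hS
  refine ⟨_, isCompact_tightSet K hK, c, fun n hn => ?_⟩
  have hn' : (0 : ℝ) < n := by positivity
  have hn1 : (1 : ℝ) ≤ n := by exact_mod_cast Nat.one_le_iff_ne_zero.2 hn
  have hsub : {y : Fin n → Ω | pairE (x n) y ∉ {q : ProbabilityMeasure (Ω × Ω) |
      ∀ m : ℕ, (q : Measure (Ω × Ω)) (K m)ᶜ ≤ ((m : ℝ≥0∞) + 1)⁻¹}} ⊆
      ⋃ m : ℕ, {y | n * (a + m + 2) ≤ ∑ i, (Prod.mk (x n i) ⁻¹' (K m)ᶜ).indicator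
        (fun _ => lam m) (y i)} := by
    intro y hy
    simp only [mem_ofPred_eq, not_forall, not_le] at hy
    obtain ⟨m, hm⟩ := hy
    refine mem_iUnion.2 ⟨m, ?_⟩
    have hmeas : MeasurableSet (K m)ᶜ := (hK m).measurableSet.compl
    have h1 : ((m : ℝ) + 1)⁻¹ ≤ (pairE (x n) y : Measure (Ω × Ω)).real (K m)ᶜ := by
      have := ENNReal.toReal_mono (measure_ne_top _ _) hm.le
      rw [ENNReal.toReal_inv, ENNReal.toReal_add (by simp) (by simp)] at this
      refine le_trans (le_of_eq ?_) this
      simp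
    have h2 : (pairE (x n) y : Measure (Ω × Ω)).real (K m)ᶜ =
        (n : ℝ)⁻¹ * ∑ i, (K m)ᶜ.indicator (fun _ => (1 : ℝ)) (x n i, y i) := by
      rw [← integral_empP hn _ (measurable_const.indicator hmeas)]
      rw [integral_indicator_const _ hmeas]; simp [pairE]
    rw [h2, inv_mul_eq_div, inv_eq_one_div, div_le_div_iff₀ (by positivity) hn', one_mul] at h1
    have h3 : ∑ i, (Prod.mk (x n i) ⁻¹' (K m)ᶜ).indicator (fun _ => lam m) (y i) =
        lam m * ∑ i, (K m)ᶜ.indicator (fun _ => (1 : ℝ)) (x n i, y i) := by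
      rw [Finset.mul_sum]
      refine Finset.sum_congr rfl fun i _ => ?_
      by_cases hi : (x n i, y i) ∈ K m <;> simp [hi]
    simp only [mem_ofPred_eq]
    rw [h3]
    have h4 : 0 ≤ a + m + 2 := by positivity
    calc (n : ℝ) * (a + m + 2) ≤ _ := mul_le_mul_of_nonneg_right h1 h4
      _ = _ := by simp only [lam]; ring
  refine (measure_mono hsub).trans ((measure_iUnion_le _).trans ?_)
  rw [sub_eq_add_neg]
  refine (ENNReal.tsum_le_tsum fun m => ?_).trans (ENNReal.tsum_mul_right.le.trans (hc (-(n * a))))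
  refine (exp_tight_aux (fun i => (ζ (x n i) : Measure Ω)) _
    (fun i => measurable_prodMk_left (hK m).measurableSet.compl) (lam m) _).trans ?_
  rw [← ENNReal.ofReal_mul (Real.exp_pos _).le, ← Real.exp_add]
  refine ENNReal.ofReal_le_ofReal (Real.exp_le_exp.2 ?_)
  have h5 : (n : ℝ)⁻¹ * ∑ i, (ζ (x n i) : Measure Ω).real (Prod.mk (x n i) ⁻¹' (K m)ᶜ) ≤
      Real.exp (-lam m) := by
    have h6 := ENNReal.toReal_mono ENNReal.ofReal_ne_top (hKn m n)
    rw [ENNReal.toReal_ofReal (Real.exp_pos _).le] at h6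
    refine h6.trans' (le_of_eq ?_)
    have hmeas : MeasurableSet (K m)ᶜ := (hK m).measurableSet.compl
    rw [avgP_coe hn]
    simp only [Measure.smul_apply, Measure.coe_finsetSum, Finset.sum_apply, smul_eq_mul,
      ENNReal.toReal_mul, ENNReal.toReal_inv, ENNReal.toReal_natCast]
    rw [ENNReal.toReal_sum (fun i _ => measure_ne_top _ _)]
    congr 1
    refine Finset.sum_congr rfl fun i _ => ?_
    rw [fib_coe, Measure.map_apply measurable_prodMk_left hmeas]; rfl
  rw [inv_mul_eq_div, div_le_iff₀ hn'] at h5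
  have h7 : Real.exp (lam m) * ∑ i, (ζ (x n i) : Measure Ω).real (Prod.mk (x n i) ⁻¹' (K m)ᶜ) ≤
      n := by
    refine (mul_le_mul_of_nonneg_left h5 (Real.exp_pos _).le).trans (le_of_eq ?_)
    rw [← mul_assoc, ← Real.exp_add]; simp
  have hm0 : (0 : ℝ) ≤ m := Nat.cast_nonneg m
  nlinarith

/-- Upper bound on the level of pair empirical measures. -/
lemma pair_upper [Nonempty Ω]
    (hT : ∀ ν : Measure Ω, IsProbabilityMeasure ν → ∀ ε : ℝ≥0∞, ε ≠ 0 →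
      ∃ K, IsCompact K ∧ ν Kᶜ ≤ ε)
    {ρ0 : ProbabilityMeasure Ω} {x : (n : ℕ) → Fin n → Ω}
    (hx : InitConv ρ0 x) {ζ : Ω → ProbabilityMeasure Ω} (hζ : Continuous ζ)
    {C : Set (ProbabilityMeasure (Ω × Ω))} (hC : IsClosed C) {a b : ℝ} (ha : 0 ≤ a) (hb : b < a)
    (hCa : ∀ q ∈ C, (q : Measure (Ω × Ω)).map Prod.fst = ρ0 →
      ¬ relEntNN (q : Measure (Ω × Ω)) (refP ρ0 ζ hζ) ≤ ENNReal.ofReal a) :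
    ∃ c : ℝ, ∀ᶠ n : ℕ in atTop, piM ζ (x n) {y | pairE (x n) y ∈ C} ≤
      ENNReal.ofReal (Real.exp (c - n * b)) := by
  obtain ⟨𝒦, h𝒦, c, hc⟩ := exp_tight hT hx hζ a ha
  let U : BoundedContinuousFunction (Ω × Ω) ℝ → Set (ProbabilityMeasure (Ω × Ω)) := fun F =>
    {q | a + ∫ z, lamB hζ F z ∂(ρ0 : Measure Ω) < ∫ z, F z ∂(q : Measure (Ω × Ω))}
  have hU : ∀ F, IsOpen (U F) := fun F => isOpen_lt continuous_const
    (ProbabilityMeasure.continuous_integral_boundedContinuousFunction F)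
  have hcov : 𝒦 ∩ C ⊆ ⋃ F, U F := by
    rintro q ⟨-, hqC⟩
    by_contra hq
    simp only [mem_iUnion, not_exists, U, mem_ofPred_eq, not_lt] at hq
    have hv : ∀ F : BoundedContinuousFunction (Ω × Ω) ℝ,
      ∫ z, F z ∂(q : Measure (Ω × Ω)) - ∫ z, lamB hζ F z ∂(ρ0 : Measure Ω) ≤ a := fun F => by
        linarith [hq F]
    exact hCa q hqC (fst_eq_of_var hζ q hv) (ent_le_of_var hζ q hv)
  obtain ⟨t, ht⟩ := (h𝒦.inter_right hC).elim_finite_subcover U hU hcov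
  have hF : ∀ F, ∀ᶠ n : ℕ in atTop, piM ζ (x n) {y | pairE (x n) y ∈ U F} ≤
      ENNReal.ofReal (Real.exp (-(n * b))) := by
    intro F
    have h1 := (hx (lamB hζ F)).eventually_lt_const
      (show _ < ∫ z, lamB hζ F z ∂(ρ0 : Measure Ω) + (a - b) by linarith)
    filter_upwards [h1, eventually_ne_atTop 0] with n h1 hn
    refine (measure_mono ?_).trans ((chernoff_pair hζ F hn (x n)
      (a + ∫ z, lamB hζ F z ∂(ρ0 : Measure Ω))).trans ?_)
    · intro y hy
      simp only [U, mem_ofPred_eq] at hy ⊢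
      exact hy.le
    · refine ENNReal.ofReal_le_ofReal (Real.exp_le_exp.2 (neg_le_neg ?_))
      exact mul_le_mul_of_nonneg_left (by linarith) (Nat.cast_nonneg n)
  have hall := (Finset.eventually_all t).2 fun F _ => hF F
  obtain ⟨c', hc'⟩ := absorb_const (C := ENNReal.ofReal (Real.exp c) + t.card)
    (ENNReal.add_ne_top.2 ⟨ENNReal.ofReal_ne_top, ENNReal.natCast_ne_top _⟩)
  refine ⟨c', ?_⟩
  filter_upwards [hall, eventually_ne_atTop 0] with n hn hn0
  have hsub : {y : Fin n → Ω | pairE (x n) y ∈ C} ⊆ {y | pairE (x n) y ∉ 𝒦} ∪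
      ⋃ F ∈ t, {y | pairE (x n) y ∈ U F} := by
    intro y hy
    by_cases hk : pairE (x n) y ∈ 𝒦
    · right
      simpa using ht ⟨hk, hy⟩
    · left; exact hk
  rw [sub_eq_add_neg]
  refine (measure_mono hsub).trans ((measure_union_le _ _).trans (le_trans ?_ (hc' _)))
  rw [add_mul]
  refine add_le_add ?_ ?_
  · refine (hc n hn0).trans ?_
    rw [← ENNReal.ofReal_mul (Real.exp_pos _).le, ← Real.exp_add]
    refine ENNReal.ofReal_le_ofReal (Real.exp_le_exp.2 ?_)
    have : (n : ℝ) * b ≤ n * a := mul_le_mul_of_nonneg_left hb.le (Nat.cast_nonneg n)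
    linarith
  · refine (measure_biUnion_finset_le t _).trans ((Finset.sum_le_sum hn).trans ?_)
    simp

/-- Level sets of the pair rate function. -/
lemma pair_good (hT : ∀ ν : Measure Ω, IsProbabilityMeasure ν → ∀ ε : ℝ≥0∞, ε ≠ 0 →
      ∃ K, IsCompact K ∧ ν Kᶜ ≤ ε)
    (ρ0 : ProbabilityMeasure Ω) (p : ProbabilityMeasure (Ω × Ω)) {c : ℝ} (hc : 0 ≤ c) :
    IsCompact {q : ProbabilityMeasure (Ω × Ω) | (q : Measure (Ω × Ω)).map Prod.fst = ρ0 ∧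
      relEntNN (q : Measure (Ω × Ω)) p ≤ ENNReal.ofReal c} := by
  let lam : ℕ → ℝ := fun m => ((m : ℝ) + 1) * (c + 1)
  have hlam : ∀ m, 0 < lam m := fun m => by positivity
  choose K hK hKp using fun m : ℕ => tight_prod hT (p : Measure (Ω × Ω)) inferInstance
    (ENNReal.ofReal (Real.exp (-lam m))) (by simp [Real.exp_pos])
  have hDV : ∀ q : ProbabilityMeasure (Ω × Ω), relEntNN (q : Measure (Ω × Ω)) p ≤
      ENNReal.ofReal c → ∀ {F : Ω × Ω → ℝ}, Measurable F → ∀ {M : ℝ}, (∀ z, |F z| ≤ M) →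
      ∫ z, F z ∂(q : Measure (Ω × Ω)) - ∫ z, (Real.exp (F z) - 1) ∂(p : Measure (Ω × Ω)) ≤ c := by
    intro q hq F hF M hM
    refine (easyDV _ _ (ne_top_of_le_ne_top ENNReal.ofReal_ne_top hq) hF hM).trans ?_
    exact ENNReal.toReal_le_of_le_ofReal hc hq
  refine (isCompact_tightSet K hK).of_isClosed_subset ?_ ?_
  · have e : {q : ProbabilityMeasure (Ω × Ω) | (q : Measure (Ω × Ω)).map Prod.fst = ρ0 ∧
        relEntNN (q : Measure (Ω × Ω)) p ≤ ENNReal.ofReal c} =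
        {q : ProbabilityMeasure (Ω × Ω) | q.map (f := Prod.fst) measurable_fst.aemeasurable = ρ0} ∩
        ⋂ F : BoundedContinuousFunction (Ω × Ω) ℝ,
          {q : ProbabilityMeasure (Ω × Ω) | ∫ z, F z ∂(q : Measure (Ω × Ω)) -
          ∫ z, (Real.exp (F z) - 1) ∂(p : Measure (Ω × Ω)) ≤ c} := by
      ext q
      simp only [mem_ofPred_eq, mem_inter_iff, mem_iInter]
      refine and_congr ?_ ⟨fun h F => hDV q h F.continuous.measurable (fun z => F.norm_coe_le_norm z),
        fun h => hardDV _ _ h⟩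
      exact ⟨fun h => Subtype.ext h, fun h => congrArg Subtype.val h⟩
    rw [e]
    refine IsClosed.inter (isClosed_eq (ProbabilityMeasure.continuous_map continuous_fst)
      continuous_const) (isClosed_iInter fun F => isClosed_le
      ((ProbabilityMeasure.continuous_integral_boundedContinuousFunction F).sub continuous_const)
      continuous_const)
  · rintro q ⟨-, hq⟩ m
    have hm : MeasurableSet (K m)ᶜ := (hK m).measurableSet.compl
    have h1 := hDV q hq (F := (K m)ᶜ.indicator fun _ => lam m) (measurable_const.indicator hm)
      (M := lam m) (fun z => by
        by_cases hz : z ∈ K m <;> simp [hz, (hlam m).le, abs_of_pos (hlam m)])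
    have h2 : ∀ z, Real.exp ((K m)ᶜ.indicator (fun _ => lam m) z) - 1 =
        (K m)ᶜ.indicator (fun _ => Real.exp (lam m) - 1) z := fun z => by
      by_cases hz : z ∈ K m <;> simp [hz]
    simp_rw [h2] at h1
    rw [integral_indicator_const _ hm, integral_indicator_const _ hm, smul_eq_mul,
      smul_eq_mul] at h1
    have h3 : (p : Measure (Ω × Ω)).real (K m)ᶜ ≤ Real.exp (-lam m) := by
      have h6 := ENNReal.toReal_mono ENNReal.ofReal_ne_top (hKp m)
      rwa [ENNReal.toReal_ofReal (Real.exp_pos _).le] at h6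
    have h4 : (p : Measure (Ω × Ω)).real (K m)ᶜ * (Real.exp (lam m) - 1) ≤ 1 := by
      have h5 : Real.exp (-lam m) * Real.exp (lam m) = 1 := by rw [← Real.exp_add]; simp
      have h6 := mul_le_mul_of_nonneg_right h3 (Real.exp_pos (lam m)).le
      have h7 : 0 ≤ (p : Measure (Ω × Ω)).real (K m)ᶜ := measureReal_nonneg
      linarith
    have h8 : (q : Measure (Ω × Ω)).real (K m)ᶜ ≤ ((m : ℝ) + 1)⁻¹ := by
      have h9 : (q : Measure (Ω × Ω)).real (K m)ᶜ * (((m : ℝ) + 1) * (c + 1)) ≤ 1 * (c + 1) := by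
        simp only [lam] at h1 h4; linarith
      rw [← mul_assoc] at h9
      have h10 := le_of_mul_le_mul_right h9 (by linarith)
      rwa [inv_eq_one_div, le_div_iff₀ (by positivity)]
    rw [← ofReal_measureReal]
    refine (ENNReal.ofReal_le_ofReal h8).trans (le_of_eq ?_)
    rw [ENNReal.ofReal_inv_of_pos (by positivity), ENNReal.ofReal_add (by positivity) zero_le_one]
    simp

end upper

end

section
set_option linter.unusedSectionVars false



/-! ### Part 5: lower bound, continuous tilts -/

section lower

variable {Ω : Type*} [MetricSpace Ω] [TopologicalSpace.SeparableSpace Ω]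
    [MeasurableSpace Ω] [BorelSpace Ω]

/-- local lower bound property -/
def LB [Nonempty Ω] (ζ : Ω → ProbabilityMeasure Ω) (x : (n : ℕ) → Fin n → Ω)
    (q : ProbabilityMeasure (Ω × Ω)) (e : ℝ) : Prop :=
  ∀ U : Set (ProbabilityMeasure (Ω × Ω)), IsOpen U → q ∈ U → ∀ b, e < b →
    ∃ c : ℝ, ∀ᶠ n : ℕ in atTop, ENNReal.ofReal (Real.exp (c - n * b)) ≤
      piM ζ (x n) {y | pairE (x n) y ∈ U}

lemma LB_closed [Nonempty Ω] {ζ : Ω → ProbabilityMeasure Ω} {x : (n : ℕ) → Fin n → Ω}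
    {q : ProbabilityMeasure (Ω × Ω)} {e : ℝ} {qj : ℕ → ProbabilityMeasure (Ω × Ω)} {ej : ℕ → ℝ}
    (h : ∀ j, LB ζ x (qj j) (ej j)) (hq : Tendsto qj atTop (𝓝 q)) (he : Tendsto ej atTop (𝓝 e)) :
    LB ζ x q e := by
  intro U hU hqU b hb
  obtain ⟨j, hj1, hj2⟩ := ((hq.eventually (hU.mem_nhds hqU)).and
    (he.eventually_lt_const hb)).exists
  exact h j U hU hj1 b hj2

lemma lln [Nonempty Ω] (hT : ∀ ν : Measure Ω, IsProbabilityMeasure ν → ∀ ε : ℝ≥0∞, ε ≠ 0 →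
      ∃ K, IsCompact K ∧ ν Kᶜ ≤ ε)
    {ρ0 : ProbabilityMeasure Ω} {x : (n : ℕ) → Fin n → Ω}
    (hx : InitConv ρ0 x) {ζ : Ω → ProbabilityMeasure Ω} (hζ : Continuous ζ)
    {U : Set (ProbabilityMeasure (Ω × Ω))} (hU : IsOpen U) (hqU : refP ρ0 ζ hζ ∈ U) :
    ∀ᶠ n : ℕ in atTop, piM ζ (x n) {y | pairE (x n) y ∉ U} ≤ 2⁻¹ := by
  let S : ℕ → Set (ProbabilityMeasure (Ω × Ω)) := fun k =>
    {q : ProbabilityMeasure (Ω × Ω) | (q : Measure (Ω × Ω)).map Prod.fst = ρ0 ∧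
      relEntNN (q : Measure (Ω × Ω)) (refP ρ0 ζ hζ) ≤ ENNReal.ofReal ((k : ℝ) + 1)⁻¹} ∩ Uᶜ
  have hS : ∀ k, IsCompact (S k) := fun k =>
    (pair_good hT ρ0 _ (by positivity)).inter_right hU.isClosed_compl
  have hempty : ∃ k, S k = ∅ := by
    by_contra! hne
    have := IsCompact.nonempty_iInter_of_sequence_nonempty_isCompact_isClosed S
      (fun k => by
        rintro q ⟨⟨h1, h2⟩, h3⟩
        refine ⟨⟨h1, h2.trans (ENNReal.ofReal_le_ofReal ?_)⟩, h3⟩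
        gcongr
        linarith) (fun k => hne k) (hS 0)
      (fun k => (hS k).isClosed)
    obtain ⟨q, hq⟩ := this
    simp only [mem_iInter] at hq
    have h0 : relEntNN (q : Measure (Ω × Ω)) (refP ρ0 ζ hζ) = 0 := by
      have hlim : Tendsto (fun k : ℕ => ENNReal.ofReal ((k : ℝ) + 1)⁻¹) atTop (𝓝 0) := by
        rw [← ENNReal.ofReal_zero]
        refine (ENNReal.continuous_ofReal.tendsto _).comp ?_
        simpa [one_div] using tendsto_one_div_add_atTop_nhds_zero_nat (𝕜 := ℝ)
      exact le_antisymm (ge_of_tendsto' hlim fun k => (hq k).1.2) bot_le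
    rw [relEnt_eq_klDiv, InformationTheory.klDiv_eq_zero_iff] at h0
    have : q = refP ρ0 ζ hζ := Subtype.ext h0
    exact (hq 0).2 (this ▸ hqU)
  obtain ⟨k, hk⟩ := hempty
  have ha : (0 : ℝ) < ((k : ℝ) + 1)⁻¹ := by positivity
  obtain ⟨c, hc⟩ := pair_upper hT hx hζ hU.isClosed_compl ha.le (half_lt_self ha)
    (fun q hq h1 h2 => by
      have : q ∈ S k := ⟨⟨h1, h2⟩, hq⟩
      rw [hk] at this; exact this)
  have hlim : Tendsto (fun n : ℕ => ENNReal.ofReal (Real.exp (c - n * (((k : ℝ) + 1)⁻¹ / 2))))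
      atTop (𝓝 0) := by
    rw [← ENNReal.ofReal_zero]
    refine (ENNReal.continuous_ofReal.tendsto _).comp (Real.tendsto_exp_atBot.comp ?_)
    refine tendsto_atBot_add_const_left _ c (tendsto_neg_atTop_atBot.comp ?_)
    exact tendsto_natCast_atTop_atTop.atTop_mul_const (half_pos ha)
  filter_upwards [hc, hlim.eventually_le_const (show (0 : ℝ≥0∞) < 2⁻¹ by simp)] with n h1 h2
  exact h1.trans h2

/-- The tilted kernel. -/
lemma tilt_prob {ζ : Ω → ProbabilityMeasure Ω} (hζ : Continuous ζ)
    (G : BoundedContinuousFunction (Ω × Ω) ℝ) (hG : ∀ a, lamB hζ G a = 0) (a : Ω) :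
    IsProbabilityMeasure ((ζ a : Measure Ω).withDensity
      fun b => ENNReal.ofReal (Real.exp (G (a, b)))) := by
  constructor
  rw [withDensity_apply _ MeasurableSet.univ, setLIntegral_univ, lintegral_exp_fib hζ, hG]
  simp

def tilt {ζ : Ω → ProbabilityMeasure Ω} (hζ : Continuous ζ)
    (G : BoundedContinuousFunction (Ω × Ω) ℝ) (hG : ∀ a, lamB hζ G a = 0) (a : Ω) :
    ProbabilityMeasure Ω := ⟨_, tilt_prob hζ G hG a⟩

lemma measurable_expG (G : BoundedContinuousFunction (Ω × Ω) ℝ) (a : Ω) :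
    Measurable fun b => ENNReal.ofReal (Real.exp (G (a, b))) :=
  (Real.measurable_exp.comp (G.continuous.measurable.comp measurable_prodMk_left)).ennreal_ofReal

lemma integral_tilt {ζ : Ω → ProbabilityMeasure Ω} (hζ : Continuous ζ)
    (G : BoundedContinuousFunction (Ω × Ω) ℝ) (hG : ∀ a, lamB hζ G a = 0) (a : Ω) (f : Ω → ℝ) :
    ∫ b, f b ∂(tilt hζ G hG a : Measure Ω) =
      ∫ b, Real.exp (G (a, b)) * f b ∂(ζ a : Measure Ω) := by
  change ∫ b, f b ∂((ζ a : Measure Ω).withDensity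
      fun b => ENNReal.ofReal (Real.exp (G (a, b)))) = _
  rw [integral_withDensity_eq_integral_toReal_smul (measurable_expG G a)
    (Eventually.of_forall fun b => ENNReal.ofReal_lt_top)]
  simp [ENNReal.toReal_ofReal (Real.exp_pos _).le]

lemma continuous_tilt {ζ : Ω → ProbabilityMeasure Ω} (hζ : Continuous ζ)
    (G : BoundedContinuousFunction (Ω × Ω) ℝ) (hG : ∀ a, lamB hζ G a = 0) :
    Continuous (tilt hζ G hG) := by
  refine continuous_iff_continuousAt.2 fun a => ?_
  refine ProbabilityMeasure.tendsto_iff_forall_integral_tendsto.2 fun f => ?_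
  simp_rw [integral_tilt hζ G hG]
  exact (fibB hζ (expB G * f.compContinuous ⟨Prod.snd, continuous_snd⟩)).continuous.tendsto a

lemma integral_refP_tilt (ρ0 : ProbabilityMeasure Ω) {ζ : Ω → ProbabilityMeasure Ω}
    (hζ : Continuous ζ) (G : BoundedContinuousFunction (Ω × Ω) ℝ) (hG : ∀ a, lamB hζ G a = 0)
    (F : BoundedContinuousFunction (Ω × Ω) ℝ) :
    ∫ z, F z ∂(refP ρ0 (tilt hζ G hG) (continuous_tilt hζ G hG) : Measure (Ω × Ω)) =
      ∫ z, Real.exp (G z) * F z ∂(refP ρ0 ζ hζ : Measure (Ω × Ω)) := by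
  rw [integral_refP ρ0 _ (F.integrable _)]
  have := integral_refP ρ0 hζ ((expB G * F).integrable (refP ρ0 ζ hζ : Measure (Ω × Ω)))
  refine Eq.trans ?_ this.symm
  simp_rw [integral_tilt hζ G hG]
  rfl

lemma lb_stepA [Nonempty Ω] (hT : ∀ ν : Measure Ω, IsProbabilityMeasure ν → ∀ ε : ℝ≥0∞, ε ≠ 0 →
      ∃ K, IsCompact K ∧ ν Kᶜ ≤ ε)
    {ρ0 : ProbabilityMeasure Ω} {x : (n : ℕ) → Fin n → Ω}
    (hx : InitConv ρ0 x) {ζ : Ω → ProbabilityMeasure Ω} (hζ : Continuous ζ)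
    (G : BoundedContinuousFunction (Ω × Ω) ℝ) (hG : ∀ a, lamB hζ G a = 0) :
    LB ζ x (refP ρ0 (tilt hζ G hG) (continuous_tilt hζ G hG))
      (∫ z, G z ∂(refP ρ0 (tilt hζ G hG) (continuous_tilt hζ G hG) : Measure (Ω × Ω))) := by
  intro U hU hqU b hb
  set q := refP ρ0 (tilt hζ G hG) (continuous_tilt hζ G hG)
  have hV : IsOpen (U ∩ {q' : ProbabilityMeasure (Ω × Ω) | ∫ z, G z ∂(q' : Measure (Ω × Ω)) < b}) :=
    hU.inter (isOpen_lt (ProbabilityMeasure.continuous_integral_boundedContinuousFunction G)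
      continuous_const)
  refine ⟨-Real.log 2, ?_⟩
  filter_upwards [lln hT hx (continuous_tilt hζ G hG) hV ⟨hqU, hb⟩, eventually_ne_atTop 0]
    with n hn hn0
  set A := {y : Fin n → Ω | pairE (x n) y ∈ U ∩ {q' : ProbabilityMeasure (Ω × Ω) |
    ∫ z, G z ∂(q' : Measure (Ω × Ω)) < b}} with hA
  have hn' : (0 : ℝ) < n := by positivity
  -- change of measure
  have hcm : piM (tilt hζ G hG) (x n) A ≤ ENNReal.ofReal (Real.exp (n * b)) * piM ζ (x n) A := by
    have hp : ∀ i, IsProbabilityMeasure ((ζ (x n i) : Measure Ω).withDensity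
      fun b => ENNReal.ofReal (Real.exp (G (x n i, b)))) := fun i => tilt_prob hζ G hG _
    have e : piM (tilt hζ G hG) (x n) = (piM ζ (x n)).withDensity
        (fun y => ∏ i, ENNReal.ofReal (Real.exp (G (x n i, y i)))) :=
      pi_withDensity' (fun i => (ζ (x n i) : Measure Ω)) _ (fun i => measurable_expG G (x n i))
    rw [e, withDensity_apply']
    refine (setLIntegral_mono (g := fun _ => ENNReal.ofReal (Real.exp (n * b)))
      measurable_const fun y hy => ?_).trans ?_
    · rw [← ENNReal.ofReal_prod_of_nonneg (fun i _ => (Real.exp_pos _).le), ← Real.exp_sum]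
      refine ENNReal.ofReal_le_ofReal (Real.exp_le_exp.2 ?_)
      have h1 : ∫ z, G z ∂(pairE (x n) y : Measure (Ω × Ω)) < b := hy.2
      rw [pairE, integral_empP hn0 _ G.continuous.measurable, inv_mul_eq_div, div_lt_iff₀ hn'] at h1
      rw [mul_comm]; exact h1.le
    · simp
  have h1 : 1 ≤ piM (tilt hζ G hG) (x n) A + 2⁻¹ := by
    calc 1 = piM (tilt hζ G hG) (x n) univ := measure_univ.symm
      _ = piM (tilt hζ G hG) (x n) (A ∪ Aᶜ) := by rw [union_compl_self]
      _ ≤ _ := (measure_union_le _ _).trans (add_le_add le_rfl hn)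
  have h2 : 2⁻¹ ≤ piM (tilt hζ G hG) (x n) A := by
    have h3 : (2⁻¹ : ℝ≥0∞) + 2⁻¹ ≤ piM (tilt hζ G hG) (x n) A + 2⁻¹ := by
      rwa [ENNReal.inv_two_add_inv_two]
    exact (ENNReal.add_le_add_iff_right (by simp)).1 h3
  have h3 : piM ζ (x n) A ≤ piM ζ (x n) {y | pairE (x n) y ∈ U} :=
    measure_mono fun y hy => hy.1
  refine le_trans ?_ h3
  have h4 := h2.trans hcm
  have h5 : ENNReal.ofReal (Real.exp (-(n * b))) * 2⁻¹ ≤ piM ζ (x n) A := by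
    calc _ ≤ ENNReal.ofReal (Real.exp (-(n * b))) *
          (ENNReal.ofReal (Real.exp (n * b)) * piM ζ (x n) A) := by gcongr
      _ = piM ζ (x n) A := by
          rw [← mul_assoc, ← ENNReal.ofReal_mul (Real.exp_pos _).le, ← Real.exp_add]; simp
  refine le_trans (le_of_eq ?_) h5
  rw [show -Real.log 2 - n * b = -(n * b) + -Real.log 2 by ring, Real.exp_add,
    ENNReal.ofReal_mul (Real.exp_pos _).le, Real.exp_neg (Real.log 2), Real.exp_log two_pos,
    ENNReal.ofReal_inv_of_pos two_pos]
  simp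

end lower

end

section
set_option linter.unusedSectionVars false



/-! ### Part 6: lower bound, general densities -/

section lower2

variable {Ω : Type*} [MetricSpace Ω] [TopologicalSpace.SeparableSpace Ω]
    [MeasurableSpace Ω] [BorelSpace Ω]

lemma ae_ae_refP (ρ0 : ProbabilityMeasure Ω) {ζ : Ω → ProbabilityMeasure Ω} (hζ : Continuous ζ)
    {P : Ω × Ω → Prop} (h : ∀ᵐ z ∂(refP ρ0 ζ hζ : Measure (Ω × Ω)), P z) :
    ∀ᵐ a ∂(ρ0 : Measure Ω), ∀ᵐ b ∂(ζ a : Measure Ω), P (a, b) :=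
  Measure.ae_ae_of_ae_compProd h

lemma ae_fst_refP (ρ0 : ProbabilityMeasure Ω) {ζ : Ω → ProbabilityMeasure Ω} (hζ : Continuous ζ)
    {P : Ω → Prop} (h : ∀ᵐ a ∂(ρ0 : Measure Ω), P a) :
    ∀ᵐ z ∂(refP ρ0 ζ hζ : Measure (Ω × Ω)), P z.1 := by
  have h' := h
  rw [← refP_fst ρ0 hζ] at h'
  exact ae_of_ae_map measurable_fst.aemeasurable h'

lemma lamB_abs_le {ζ : Ω → ProbabilityMeasure Ω} (hζ : Continuous ζ)
    (F : BoundedContinuousFunction (Ω × Ω) ℝ) {M : ℝ} (hM0 : 0 ≤ M) (hM : ∀ z, |F z| ≤ M) (a : Ω) :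
    |lamB hζ F a| ≤ M := by
  have h1 : ‖F‖ ≤ M := (BoundedContinuousFunction.norm_le hM0).2 hM
  have h2 : ‖lamB hζ F‖ ≤ ‖F‖ :=
    BoundedContinuousFunction.norm_ofNormedAddCommGroup_le _ (norm_nonneg _) _
  exact ((lamB hζ F).norm_coe_le_norm a).trans (h2.trans h1)

lemma lb_stepB [Nonempty Ω] (hT : ∀ ν : Measure Ω, IsProbabilityMeasure ν → ∀ ε : ℝ≥0∞, ε ≠ 0 →
      ∃ K, IsCompact K ∧ ν Kᶜ ≤ ε)
    {ρ0 : ProbabilityMeasure Ω} {x : (n : ℕ) → Fin n → Ω}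
    (hx : InitConv ρ0 x) {ζ : Ω → ProbabilityMeasure Ω} (hζ : Continuous ζ)
    {F : Ω × Ω → ℝ} (hF : Measurable F) {M : ℝ} (hM : ∀ z, |F z| ≤ M)
    (h1 : ∀ᵐ a ∂(ρ0 : Measure Ω), ∫ b, Real.exp (F (a, b)) ∂(ζ a : Measure Ω) = 1)
    (q : ProbabilityMeasure (Ω × Ω))
    (hq : ∀ f : BoundedContinuousFunction (Ω × Ω) ℝ, ∫ z, f z ∂(q : Measure (Ω × Ω)) =
      ∫ z, Real.exp (F z) * f z ∂(refP ρ0 ζ hζ : Measure (Ω × Ω))) :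
    LB ζ x q (∫ z, Real.exp (F z) * F z ∂(refP ρ0 ζ hζ : Measure (Ω × Ω))) := by
  have hM0 : 0 ≤ M := (abs_nonneg _).trans (hM (Classical.arbitrary _))
  obtain ⟨f, hf, hlim⟩ := exists_bcf_approx (refP ρ0 ζ hζ : Measure (Ω × Ω)) hF hM
  let G : ℕ → BoundedContinuousFunction (Ω × Ω) ℝ := fun j =>
    f j - (lamB hζ (f j)).compContinuous ⟨Prod.fst, continuous_fst⟩
  have hGz : ∀ j z, G j z = f j z - lamB hζ (f j) z.1 := fun j z => rfl
  have hG0 : ∀ j a, lamB hζ (G j) a = 0 := by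
    intro j a
    apply Real.exp_injective
    rw [exp_lamB]
    simp_rw [hGz, Real.exp_sub]
    rw [integral_div, ← exp_lamB hζ, div_self (Real.exp_pos _).ne', Real.exp_zero]
  have hGM : ∀ j z, |G j z| ≤ 2 * M := fun j z => by
    rw [hGz]
    have h1 := abs_le.1 (hf j z)
    have h2 := abs_le.1 (lamB_abs_le hζ (f j) hM0 (hf j) z.1)
    rw [abs_le]; constructor <;> linarith
  have hlam : ∀ᵐ a ∂(ρ0 : Measure Ω), Tendsto (fun j => lamB hζ (f j) a) atTop (𝓝 0) := by
    filter_upwards [ae_ae_refP ρ0 hζ hlim, h1] with a ha ha1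
    have h2 : Tendsto (fun j => ∫ b, Real.exp (f j (a, b)) ∂(ζ a : Measure Ω)) atTop
        (𝓝 (∫ b, Real.exp (F (a, b)) ∂(ζ a : Measure Ω))) := by
      refine tendsto_integral_of_dominated_convergence (fun _ => Real.exp M)
        (fun j => ?_) (integrable_const _)
        (fun j => Eventually.of_forall fun b => ?_) ?_
      · exact (Real.measurable_exp.comp ((f j).continuous.measurable.comp
          measurable_prodMk_left)).aestronglyMeasurable
      · rw [Real.norm_eq_abs, abs_of_pos (Real.exp_pos _)]
        exact Real.exp_le_exp.2 ((le_abs_self _).trans (hf j _))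
      · filter_upwards [ha] with b hb
        exact (Real.continuous_exp.tendsto _).comp hb
    rw [ha1] at h2
    have h3 := h2.log one_ne_zero
    rw [Real.log_one] at h3
    refine h3.congr fun j => ?_
    rw [← exp_lamB hζ, Real.log_exp]
  have hGlim : ∀ᵐ z ∂(refP ρ0 ζ hζ : Measure (Ω × Ω)),
      Tendsto (fun j => G j z) atTop (𝓝 (F z)) := by
    filter_upwards [hlim, ae_fst_refP ρ0 hζ hlam] with z hz1 hz2
    have := hz1.sub hz2
    rw [sub_zero] at this
    exact this
  refine LB_closed (fun j => lb_stepA hT hx hζ (G j) (hG0 j)) ?_ ?_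
  · refine ProbabilityMeasure.tendsto_iff_forall_integral_tendsto.2 fun g => ?_
    simp_rw [integral_refP_tilt]
    rw [hq]
    refine tendsto_integral_of_dominated_convergence (fun _ => Real.exp (2 * M) * ‖g‖)
      (fun j => ?_) (integrable_const _)
      (fun j => Eventually.of_forall fun z => ?_) ?_
    · exact ((expB (G j)).continuous.measurable.mul g.continuous.measurable).aestronglyMeasurable
    · rw [norm_mul, Real.norm_eq_abs, abs_of_pos (Real.exp_pos _)]
      exact mul_le_mul (Real.exp_le_exp.2 ((le_abs_self _).trans (hGM j z)))
        (g.norm_coe_le_norm z) (norm_nonneg _) (Real.exp_pos _).le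
    · filter_upwards [hGlim] with z hz
      exact ((Real.continuous_exp.tendsto _).comp hz).mul_const _
  · simp_rw [integral_refP_tilt]
    refine tendsto_integral_of_dominated_convergence (fun _ => Real.exp (2 * M) * (2 * M))
      (fun j => ?_) (integrable_const _)
      (fun j => Eventually.of_forall fun z => ?_) ?_
    · exact ((expB (G j)).continuous.measurable.mul
        (G j).continuous.measurable).aestronglyMeasurable
    · rw [norm_mul, Real.norm_eq_abs, abs_of_pos (Real.exp_pos _)]
      exact mul_le_mul (Real.exp_le_exp.2 ((le_abs_self _).trans (hGM j z)))
        (hGM j z) (norm_nonneg _) (Real.exp_pos _).le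
    · filter_upwards [hGlim] with z hz
      exact ((Real.continuous_exp.tendsto _).comp hz).mul hz

lemma xlogx_bound {g h : ℝ} (hg : 0 ≤ g) (h0 : 0 < h) (hh : h ≤ g + 2) :
    |h * Real.log h| ≤ 2 * |g * Real.log g| + 2 * Real.log 2 * g + (4 * Real.log 4 + 1) := by
  have hl2 : 0 ≤ Real.log 2 := Real.log_nonneg (by norm_num)
  have hl4 : 0 ≤ Real.log 4 := Real.log_nonneg (by norm_num)
  have hB : 0 ≤ 2 * |g * Real.log g| + 2 * Real.log 2 * g := by positivity
  rcases le_total h 1 with h1 | h1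
  · have := Real.abs_log_mul_self_lt h h0 h1
    rw [mul_comm] at this
    linarith
  · have hlh : 0 ≤ Real.log h := Real.log_nonneg h1
    rw [abs_of_nonneg (mul_nonneg h0.le hlh)]
    rcases le_total g 2 with h2 | h2
    · have h3 : h * Real.log h ≤ 4 * Real.log 4 :=
        mul_le_mul (by linarith) (Real.log_le_log h0 (by linarith)) hlh (by norm_num)
      linarith
    · have h3 : h * Real.log h ≤ (2 * g) * Real.log (2 * g) :=
        mul_le_mul (by linarith) (Real.log_le_log h0 (by linarith)) hlh (by linarith)
      rw [Real.log_mul two_ne_zero (by linarith)] at h3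
      have h4 := le_abs_self (g * Real.log g)
      nlinarith

lemma fiber_one {ρ0 : ProbabilityMeasure Ω} {ζ : Ω → ProbabilityMeasure Ω} (hζ : Continuous ζ)
    (q : ProbabilityMeasure (Ω × Ω)) (hfst : (q : Measure (Ω × Ω)).map Prod.fst = ρ0)
    {g : Ω × Ω → ℝ} (hg : Measurable g)
    (hq : (q : Measure (Ω × Ω)) = (refP ρ0 ζ hζ : Measure (Ω × Ω)).withDensity
      fun z => ENNReal.ofReal (g z)) :
    ∀ᵐ a ∂(ρ0 : Measure Ω), ∫⁻ b, ENNReal.ofReal (g (a, b)) ∂(ζ a : Measure Ω) = 1 := by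
  have hgm : Measurable fun z => ENNReal.ofReal (g z) := hg.ennreal_ofReal
  have hm : Measurable fun a => ∫⁻ b, ENNReal.ofReal (g (a, b)) ∂(ζ a : Measure Ω) :=
    Measurable.lintegral_kernel_prod_right' (κ := ker ζ hζ) hgm
  refine ae_eq_of_forall_setLIntegral_eq_of_sigmaFinite hm measurable_const fun s hs _ => ?_
  have h1 : (q : Measure (Ω × Ω)).map Prod.fst s = (ρ0 : Measure Ω) s := by rw [hfst]
  rw [Measure.map_apply measurable_fst hs, hq, withDensity_apply _ (measurable_fst hs),
    ← lintegral_indicator (measurable_fst hs),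
    lintegral_refP ρ0 hζ (hgm.indicator (measurable_fst hs))] at h1
  rw [setLIntegral_const, one_mul, ← h1, ← lintegral_indicator hs]
  refine lintegral_congr fun a => ?_
  by_cases ha : a ∈ s
  · simp [indicator, ha]
  · simp [indicator, ha]

end lower2

end

section
set_option linter.unusedSectionVars false



/-! ### Part 7: lower bound, finite entropy -/

section lower3

variable {Ω : Type*} [MetricSpace Ω] [TopologicalSpace.SeparableSpace Ω]
    [MeasurableSpace Ω] [BorelSpace Ω]

lemma lb_stepC [Nonempty Ω] (hT : ∀ ν : Measure Ω, IsProbabilityMeasure ν → ∀ ε : ℝ≥0∞, ε ≠ 0 →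
      ∃ K, IsCompact K ∧ ν Kᶜ ≤ ε)
    {ρ0 : ProbabilityMeasure Ω} {x : (n : ℕ) → Fin n → Ω}
    (hx : InitConv ρ0 x) {ζ : Ω → ProbabilityMeasure Ω} (hζ : Continuous ζ)
    (q : ProbabilityMeasure (Ω × Ω)) (hfst : (q : Measure (Ω × Ω)).map Prod.fst = ρ0)
    {g : Ω × Ω → ℝ} (hg : Measurable g) (hg0 : ∀ z, 0 ≤ g z)
    (hq : (q : Measure (Ω × Ω)) = (refP ρ0 ζ hζ : Measure (Ω × Ω)).withDensity
      fun z => ENNReal.ofReal (g z))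
    (hgi : Integrable g (refP ρ0 ζ hζ : Measure (Ω × Ω)))
    (hgl : Integrable (fun z => g z * Real.log (g z)) (refP ρ0 ζ hζ : Measure (Ω × Ω))) :
    LB ζ x q (∫ z, g z * Real.log (g z) ∂(refP ρ0 ζ hζ : Measure (Ω × Ω))) := by
  set p := (refP ρ0 ζ hζ : Measure (Ω × Ω)) with hp
  have hfib := fiber_one hζ q hfst hg hq
  let N : ℕ → ℝ := fun k => (k : ℝ) + 1
  have hN1 : ∀ k, 1 ≤ N k := fun k => by
    have : (0 : ℝ) ≤ k := Nat.cast_nonneg k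
    simp only [N]; linarith
  have hN0 : ∀ k, 0 < N k := fun k => zero_lt_one.trans_le (hN1 k)
  have he0 : ∀ k, 0 < (N k)⁻¹ := fun k => inv_pos.2 (hN0 k)
  have he1 : ∀ k, (N k)⁻¹ ≤ 1 := fun k => inv_le_one_of_one_le₀ (hN1 k)
  have helim : Tendsto (fun k => (N k)⁻¹) atTop (𝓝 0) := by
    simpa [one_div, N] using tendsto_one_div_add_atTop_nhds_zero_nat (𝕜 := ℝ)
  let mk : ℕ → Ω × Ω → ℝ := fun k z => min (g z) (N k)
  have hmm : ∀ k, Measurable (mk k) := fun k => hg.min measurable_const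
  have hm0 : ∀ k z, 0 ≤ mk k z := fun k z => le_min (hg0 z) (hN0 k).le
  have hmN : ∀ k z, mk k z ≤ N k := fun k z => min_le_right _ _
  have hmg : ∀ k z, mk k z ≤ g z := fun k z => min_le_left _ _
  let s : ℕ → Ω → ℝ := fun k a => ∫ b, mk k (a, b) ∂(ζ a : Measure Ω)
  have hsm : ∀ k, Measurable (s k) := fun k =>
    (StronglyMeasurable.integral_kernel_prod_right' (κ := ker ζ hζ)
      (hmm k).stronglyMeasurable).measurable
  have hs0 : ∀ k a, 0 ≤ s k a := fun k a => integral_nonneg fun b => hm0 k _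
  let r : ℕ → Ω → ℝ := fun k a => max 0 (1 - s k a)
  have hrm : ∀ k, Measurable (r k) := fun k =>
    measurable_const.max (measurable_const.sub (hsm k))
  have hr0 : ∀ k a, 0 ≤ r k a := fun k a => le_max_left _ _
  have hr1 : ∀ k a, r k a ≤ 1 := fun k a => max_le zero_le_one (by linarith [hs0 k a])
  let h : ℕ → Ω × Ω → ℝ := fun k z => (1 - (N k)⁻¹) * (mk k z + r k z.1) + (N k)⁻¹
  have hhm : ∀ k, Measurable (h k) := fun k =>
    (((hmm k).add ((hrm k).comp measurable_fst)).const_mul _).add_const _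
  have hhl : ∀ k z, (N k)⁻¹ ≤ h k z := fun k z => by
    have := mul_nonneg (sub_nonneg.2 (he1 k)) (add_nonneg (hm0 k z) (hr0 k z.1))
    simp only [h]; linarith
  have hhpos : ∀ k z, 0 < h k z := fun k z => (he0 k).trans_le (hhl k z)
  have hhu : ∀ k z, h k z ≤ mk k z + 2 := fun k z => by
    have h1 := mul_le_of_le_one_left (add_nonneg (hm0 k z) (hr0 k z.1))
      (show 1 - (N k)⁻¹ ≤ 1 by linarith [he0 k])
    have h2 := hr1 k z.1
    have h3 := he1 k
    simp only [h]; linarith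
  have hhN : ∀ k z, h k z ≤ N k + 2 := fun k z => (hhu k z).trans (by linarith [hmN k z])
  have hhg : ∀ k z, h k z ≤ g z + 2 := fun k z => (hhu k z).trans (by linarith [hmg k z])
  have hFm : ∀ k, Measurable fun z => Real.log (h k z) := fun k =>
    Real.measurable_log.comp (hhm k)
  have hFM : ∀ k z, |Real.log (h k z)| ≤ Real.log (N k + 2) := fun k z => by
    rw [abs_le]
    constructor
    · have h1 := Real.log_le_log (he0 k) (hhl k z)
      rw [Real.log_inv] at h1
      have h2 := Real.log_le_log (hN0 k) (show N k ≤ N k + 2 by linarith)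
      linarith
    · exact Real.log_le_log (hhpos k z) (hhN k z)
  -- fiber facts
  have hgfib : ∀ᵐ a ∂(ρ0 : Measure Ω), Integrable (fun b => g (a, b)) (ζ a : Measure Ω) ∧
      ∫ b, g (a, b) ∂(ζ a : Measure Ω) = 1 := by
    filter_upwards [hfib] with a ha
    have hmeas : Measurable fun b => g (a, b) := hg.comp measurable_prodMk_left
    refine ⟨⟨hmeas.aestronglyMeasurable, ?_⟩, ?_⟩
    · rw [hasFiniteIntegral_iff_ofReal (Eventually.of_forall fun b => hg0 _), ha]
      exact ENNReal.one_lt_top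
    · rw [integral_eq_lintegral_of_nonneg_ae (Eventually.of_forall fun b => hg0 _)
        hmeas.aestronglyMeasurable, ha, ENNReal.toReal_one]
  have hmint : ∀ k a, Integrable (fun b => mk k (a, b)) (ζ a : Measure Ω) := fun k a =>
    integrable_bddF _ ((hmm k).comp measurable_prodMk_left) (M := N k) fun b => by
      rw [abs_of_nonneg (hm0 k _)]; exact hmN k _
  have hh1 : ∀ k, ∀ᵐ a ∂(ρ0 : Measure Ω), ∫ b, h k (a, b) ∂(ζ a : Measure Ω) = 1 := by
    intro k
    filter_upwards [hgfib] with a ha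
    have hs1 : s k a ≤ 1 := by
      rw [← ha.2]
      exact integral_mono (hmint k a) ha.1 fun b => hmg k _
    have hr : r k a = 1 - s k a := max_eq_right (by linarith)
    have e1 : ∫ b, h k (a, b) ∂(ζ a : Measure Ω) = (1 - (N k)⁻¹) * (s k a + r k a) + (N k)⁻¹ := by
      simp only [h]
      have i1 : Integrable (fun b => mk k (a, b) + r k a) (ζ a : Measure Ω) :=
        (hmint k a).add (integrable_const _)
      have i2 : Integrable (fun b => (1 - (N k)⁻¹) * (mk k (a, b) + r k a)) (ζ a : Measure Ω) :=
        i1.const_mul _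
      rw [integral_add i2 (integrable_const _),
        integral_const_mul, integral_add (hmint k a) (integrable_const _)]
      simp [s]
    rw [e1, hr]; ring
  have hslim : ∀ᵐ a ∂(ρ0 : Measure Ω), Tendsto (fun k => r k a) atTop (𝓝 0) := by
    filter_upwards [hgfib] with a ha
    have h1 : Tendsto (fun k => s k a) atTop (𝓝 (∫ b, g (a, b) ∂(ζ a : Measure Ω))) := by
      refine tendsto_integral_of_dominated_convergence (fun b => g (a, b))
        (fun k => (hmint k a).aestronglyMeasurable) ha.1
        (fun k => Eventually.of_forall fun b => ?_) (Eventually.of_forall fun b => ?_)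
      · rw [Real.norm_eq_abs, abs_of_nonneg (hm0 k _)]; exact hmg k _
      · refine tendsto_const_nhds.congr' ?_
        obtain ⟨n, hn⟩ := exists_nat_gt (g (a, b))
        filter_upwards [eventually_ge_atTop n] with k hk
        have : (n : ℝ) ≤ k := by exact_mod_cast hk
        exact (min_eq_left (by simp only [N]; linarith)).symm
    rw [ha.2] at h1
    have h2 := (tendsto_const_nhds (x := (0 : ℝ))).max ((tendsto_const_nhds (x := (1 : ℝ))).sub h1)
    simpa using h2
  have hhlim : ∀ᵐ z ∂p, Tendsto (fun k => h k z) atTop (𝓝 (g z)) := by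
    filter_upwards [ae_fst_refP ρ0 hζ hslim] with z hz
    have h1 : Tendsto (fun k => mk k z) atTop (𝓝 (g z)) := by
      refine tendsto_const_nhds.congr' ?_
      obtain ⟨n, hn⟩ := exists_nat_gt (g z)
      filter_upwards [eventually_ge_atTop n] with k hk
      have : (n : ℝ) ≤ k := by exact_mod_cast hk
      exact (min_eq_left (by simp only [N]; linarith)).symm
    have h2 := ((((tendsto_const_nhds (x := (1 : ℝ))).sub helim).mul (h1.add hz))).add helim
    simpa using h2
  -- the approximating measures
  have hprob : ∀ k, IsProbabilityMeasure (p.withDensity fun z => ENNReal.ofReal (h k z)) := by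
    intro k
    constructor
    rw [withDensity_apply _ MeasurableSet.univ, setLIntegral_univ, hp,
      lintegral_refP ρ0 hζ (hhm k).ennreal_ofReal]
    have : ∀ᵐ a ∂(ρ0 : Measure Ω),
        ∫⁻ b, ENNReal.ofReal (h k (a, b)) ∂(ζ a : Measure Ω) = 1 := by
      filter_upwards [hh1 k] with a ha
      rw [← ofReal_integral_eq_lintegral_ofReal, ha, ENNReal.ofReal_one]
      · exact integrable_bddF _ ((hhm k).comp measurable_prodMk_left) (M := N k + 2) fun b => by
          rw [abs_of_pos (hhpos k _)]; exact hhN k _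
      · exact Eventually.of_forall fun b => (hhpos k _).le
    rw [lintegral_congr_ae this]
    simp
  let qk : ℕ → ProbabilityMeasure (Ω × Ω) := fun k => ⟨_, hprob k⟩
  have hqk : ∀ k (f : Ω × Ω → ℝ), ∫ z, f z ∂(qk k : Measure (Ω × Ω)) = ∫ z, h k z * f z ∂p := by
    intro k f
    change ∫ z, f z ∂(p.withDensity fun z => ENNReal.ofReal (h k z)) = _
    rw [integral_withDensity_eq_integral_toReal_smul (hhm k).ennreal_ofReal
      (Eventually.of_forall fun b => ENNReal.ofReal_lt_top)]
    simp [ENNReal.toReal_ofReal (hhpos k _).le]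
  have hLB : ∀ k, LB ζ x (qk k) (∫ z, h k z * Real.log (h k z) ∂p) := by
    intro k
    have := lb_stepB hT hx hζ (hFm k) (hFM k) (by simpa only [Real.exp_log (hhpos k _)] using hh1 k)
      (qk k) (fun f => by simp only [Real.exp_log (hhpos k _)]; exact hqk k f)
    simpa only [Real.exp_log (hhpos k _)] using this
  refine LB_closed hLB ?_ ?_
  · refine ProbabilityMeasure.tendsto_iff_forall_integral_tendsto.2 fun f => ?_
    simp_rw [hqk]
    have e : ∫ z, f z ∂(q : Measure (Ω × Ω)) = ∫ z, g z * f z ∂p := by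
      rw [hq, integral_withDensity_eq_integral_toReal_smul hg.ennreal_ofReal
        (Eventually.of_forall fun b => ENNReal.ofReal_lt_top)]
      simp [ENNReal.toReal_ofReal (hg0 _), hp]
    rw [e]
    refine tendsto_integral_of_dominated_convergence (fun z => (g z + 2) * ‖f‖)
      (fun k => ((hhm k).mul f.continuous.measurable).aestronglyMeasurable)
      ((hgi.add (integrable_const _)).mul_const _)
      (fun k => Eventually.of_forall fun z => ?_) ?_
    · rw [norm_mul, Real.norm_eq_abs, abs_of_pos (hhpos k z)]
      exact mul_le_mul (hhg k z) (f.norm_coe_le_norm z) (norm_nonneg _) (by linarith [hg0 z])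
    · filter_upwards [hhlim] with z hz
      exact hz.mul_const _
  · refine tendsto_integral_of_dominated_convergence
      (fun z => 2 * |g z * Real.log (g z)| + 2 * Real.log 2 * g z + (4 * Real.log 4 + 1))
      (fun k => ((hhm k).mul (hFm k)).aestronglyMeasurable)
      (((hgl.abs.const_mul _).add (hgi.const_mul _)).add (integrable_const _))
      (fun k => Eventually.of_forall fun z => xlogx_bound (hg0 z) (hhpos k z) (hhg k z)) ?_
    filter_upwards [hhlim] with z hz
    exact (Real.continuous_mul_log.tendsto _).comp hz

lemma pair_lower [Nonempty Ω] (hT : ∀ ν : Measure Ω, IsProbabilityMeasure ν → ∀ ε : ℝ≥0∞, ε ≠ 0 →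
      ∃ K, IsCompact K ∧ ν Kᶜ ≤ ε)
    {ρ0 : ProbabilityMeasure Ω} {x : (n : ℕ) → Fin n → Ω}
    (hx : InitConv ρ0 x) {ζ : Ω → ProbabilityMeasure Ω} (hζ : Continuous ζ)
    (q : ProbabilityMeasure (Ω × Ω)) (hfst : (q : Measure (Ω × Ω)).map Prod.fst = ρ0)
    (hfin : relEntNN (q : Measure (Ω × Ω)) (refP ρ0 ζ hζ) ≠ ⊤) :
    LB ζ x q (relEntNN (q : Measure (Ω × Ω)) (refP ρ0 ζ hζ)).toReal := by
  set p := (refP ρ0 ζ hζ : Measure (Ω × Ω)) with hp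
  have hkl := hfin
  rw [relEnt_eq_klDiv] at hkl
  obtain ⟨hac, hi⟩ := InformationTheory.klDiv_ne_top_iff.1 hkl
  have hnn : 0 ≤ ∫ z, llr (q : Measure (Ω × Ω)) p z ∂(q : Measure (Ω × Ω)) := by
    have := InformationTheory.toReal_klDiv_of_measure_eq hac (by simp)
    rw [← this]; exact ENNReal.toReal_nonneg
  have e1 : (relEntNN (q : Measure (Ω × Ω)) p).toReal =
      ∫ z, llr (q : Measure (Ω × Ω)) p z ∂(q : Measure (Ω × Ω)) := by
    rw [relEntNN, if_pos ⟨hac, hi⟩]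
    exact ENNReal.toReal_ofReal hnn
  have e2 := integral_rnDeriv_smul (f := llr (q : Measure (Ω × Ω)) p) hac
  rw [e1, ← e2]
  refine lb_stepC hT hx hζ q hfst (g := fun z => ((q : Measure (Ω × Ω)).rnDeriv p z).toReal)
    (Measure.measurable_rnDeriv _ _).ennreal_toReal (fun z => ENNReal.toReal_nonneg) ?_
    Measure.integrable_toReal_rnDeriv ((integrable_rnDeriv_smul_iff hac).2 hi)
  rw [← hp]
  conv_lhs => rw [← Measure.withDensity_rnDeriv_eq _ _ hac]
  refine withDensity_congr_ae ?_
  filter_upwards [Measure.rnDeriv_lt_top (q : Measure (Ω × Ω)) p] with z hz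
  rw [ENNReal.ofReal_toReal hz.ne]

end lower3

end



/-- second marginal -/
def sndP {Ω : Type*} [MeasurableSpace Ω] (q : ProbabilityMeasure (Ω × Ω)) :
    ProbabilityMeasure Ω := q.map measurable_snd.aemeasurable

lemma sndP_coe {Ω : Type*} [MeasurableSpace Ω] (q : ProbabilityMeasure (Ω × Ω)) :
    (sndP q : Measure Ω) = (q : Measure (Ω × Ω)).map Prod.snd := rfl

section
variable {Ω : Type*} [MetricSpace Ω] [TopologicalSpace.SeparableSpace Ω]
    [MeasurableSpace Ω] [BorelSpace Ω]

lemma continuous_sndP : Continuous (sndP (Ω := Ω)) :=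
  ProbabilityMeasure.continuous_map continuous_snd

lemma tight_of_radon (hRadon : ∀ μ : Measure Ω, IsProbabilityMeasure μ → μ.InnerRegular) :
    ∀ ν : Measure Ω, IsProbabilityMeasure ν → ∀ ε : ℝ≥0∞, ε ≠ 0 →
      ∃ K, IsCompact K ∧ ν Kᶜ ≤ ε := by
  intro ν hν ε hε
  have := hRadon ν hν
  obtain ⟨K, _, hK, h⟩ := MeasurableSet.univ.exists_isCompact_sdiff_lt (μ := ν)
    (measure_ne_top ν _) hε
  exact ⟨K, hK, by rw [compl_eq_univ_sdiff]; exact h.le⟩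

lemma sndP_pairE [Nonempty Ω] {n : ℕ} (hn : n ≠ 0) (x y : Fin n → Ω) :
    (sndP (pairE x y) : Measure Ω) = (n : ℝ≥0∞)⁻¹ • ∑ i : Fin n, Measure.dirac (y i) := by
  rw [sndP_coe, pairE, empP_coe hn, Measure.map_smul]
  congr 1
  have : ∀ s : Finset (Fin n), (∑ i ∈ s, Measure.dirac (x i, y i)).map Prod.snd =
      ∑ i ∈ s, Measure.dirac (y i) := by
    intro s
    induction s using Finset.induction_on with
    | empty => simp
    | insert a s ha ih =>
      rw [Finset.sum_insert ha, Finset.sum_insert ha, Measure.map_add _ _ measurable_snd, ih,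
        Measure.map_dirac' measurable_snd]
  exact this _

lemma measurable_emp {n : ℕ} {e : (Fin n → Ω) → ProbabilityMeasure Ω}
    (he : ∀ y, (e y : Measure Ω) = (n : ℝ≥0∞)⁻¹ • ∑ i : Fin n, Measure.dirac (y i)) :
    @Measurable _ _ _ probMeasurableSpace e := by
  have h : Measurable fun y => (e y : Measure Ω) := by
    refine Measure.measurable_of_measurable_coe _ fun s hs => ?_
    simp_rw [he]
    simp only [Measure.smul_apply, Measure.finsetSum_apply, smul_eq_mul]
    refine Measurable.const_mul (Finset.measurable_sum _ fun i _ => ?_) _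
    have : Measurable fun b : Ω => Measure.dirac b s :=
      (Measure.measurable_coe hs).comp Measure.measurable_dirac
    exact this.comp (measurable_pi_apply i)
  exact Measurable.subtype_mk h

lemma law_apply [Nonempty Ω] {n : ℕ} (hn : n ≠ 0) (ζ : Ω → ProbabilityMeasure Ω) (x : Fin n → Ω)
    {e : (Fin n → Ω) → ProbabilityMeasure Ω}
    (he : ∀ y, (e y : Measure Ω) = (n : ℝ≥0∞)⁻¹ • ∑ i : Fin n, Measure.dirac (y i))
    {S : Set (ProbabilityMeasure Ω)} (hS : MeasurableSet S) :
    (Measure.pi fun i : Fin n => (ζ (x i) : Measure Ω)).map e S =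
      piM ζ x {y | pairE x y ∈ sndP ⁻¹' S} := by
  rw [Measure.map_apply (measurable_emp he) hS]
  have : ∀ y, e y = sndP (pairE x y) := fun y =>
    Subtype.ext ((he y).trans (sndP_pairE hn x y).symm)
  unfold piM
  congr 1
  ext y
  simp [this]

lemma good_rate (hT : ∀ ν : Measure Ω, IsProbabilityMeasure ν → ∀ ε : ℝ≥0∞, ε ≠ 0 →
      ∃ K, IsCompact K ∧ ν Kᶜ ≤ ε)
    (ρ0 : ProbabilityMeasure Ω) (p : ProbabilityMeasure (Ω × Ω)) {c : ℝ≥0∞} (hc : c ≠ ⊤) :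
    IsCompact {ρ : ProbabilityMeasure Ω | ⨅ q ∈ {q : Measure (Ω × Ω) |
          q.map Prod.fst = (ρ0 : Measure Ω) ∧ q.map Prod.snd = (ρ : Measure Ω) ∧
          IsProbabilityMeasure q}, relEntNN q p ≤ c} := by
  let K : ℕ → Set (ProbabilityMeasure Ω) := fun k => sndP ''
    {q : ProbabilityMeasure (Ω × Ω) | (q : Measure (Ω × Ω)).map Prod.fst = ρ0 ∧
      relEntNN (q : Measure (Ω × Ω)) p ≤ ENNReal.ofReal (c.toReal + 1 / ((k : ℝ) + 1))}
  have hK : ∀ k, IsCompact (K k) := fun k =>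
    (pair_good hT ρ0 p (by positivity)).image continuous_sndP
  have heq : {ρ : ProbabilityMeasure Ω | ⨅ q ∈ {q : Measure (Ω × Ω) |
          q.map Prod.fst = (ρ0 : Measure Ω) ∧ q.map Prod.snd = (ρ : Measure Ω) ∧
          IsProbabilityMeasure q}, relEntNN q p ≤ c} = ⋂ k, K k := by
    ext ρ
    simp only [mem_ofPred_eq, mem_iInter]
    have hcr : ENNReal.ofReal c.toReal = c := ENNReal.ofReal_toReal hc
    constructor
    · intro h k
      have hlt : c < ENNReal.ofReal (c.toReal + 1 / ((k : ℝ) + 1)) := by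
        rw [ENNReal.lt_ofReal_iff_toReal_lt hc]
        have : 0 < 1 / ((k : ℝ) + 1) := by positivity
        linarith
      obtain ⟨q, hq⟩ := iInf_lt_iff.1 (h.trans_lt hlt)
      obtain ⟨⟨h1, h2, h3⟩, hq⟩ := iInf_lt_iff.1 hq
      exact ⟨⟨q, h3⟩, ⟨h1, hq.le⟩, Subtype.ext h2⟩
    · intro h
      have hlim : Tendsto (fun k : ℕ => ENNReal.ofReal (c.toReal + 1 / ((k : ℝ) + 1))) atTop
          (𝓝 c) := by
        have := ENNReal.tendsto_ofReal
          ((tendsto_one_div_add_atTop_nhds_zero_nat (𝕜 := ℝ)).const_add c.toReal)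
        rwa [add_zero, hcr] at this
      refine ge_of_tendsto' hlim fun k => ?_
      obtain ⟨q, ⟨h1, h2⟩, rfl⟩ := h k
      exact (iInf₂_le (q : Measure (Ω × Ω)) ⟨h1, (sndP_coe q).symm, inferInstance⟩).trans h2
  rw [heq]
  exact (hK 0).of_isClosed_subset (isClosed_iInter fun k => (hK k).isClosed) (iInter_subset _ 0)

end

/-- the (contracted) quenched large-deviation principle for the
empirical measures `L_n = n⁻¹ Σ δ_{Y_i}` of independent particles with
deterministic initial positions `x_i` and transition kernel `ζ`, with rate
functional `J(ρ) = inf_{q ∈ Γ(ρ⁰,ρ)} H(q|p)`, where `p(dx dy) = ρ⁰(dx) ζ^x(dy)`. -/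
theorem stmt17 (Ω : Type*) [MetricSpace Ω] [TopologicalSpace.SeparableSpace Ω]
    [MeasurableSpace Ω] [BorelSpace Ω]
    -- every Borel probability measure on Ω is Radon (inner regular):
    (hRadon : ∀ μ : Measure Ω, IsProbabilityMeasure μ → μ.InnerRegular)
    (ρ0 : ProbabilityMeasure Ω)
    (x : (n : ℕ) → Fin n → Ω)
    -- narrow convergence of the initial empirical measures to ρ⁰:
    (hinit : ∀ f : BoundedContinuousFunction Ω ℝ,
      Tendsto (fun n : ℕ =>
          ∫ a, f a ∂((n : ℝ≥0∞)⁻¹ • ∑ i : Fin n, Measure.dirac (x n i)))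
        atTop (𝓝 (∫ a, f a ∂(ρ0 : Measure Ω))))
    (ζ : Ω → ProbabilityMeasure Ω) (hζ : Continuous ζ)
    -- the empirical measure map of the final positions:
    (emp : (n : ℕ) → (Fin n → Ω) → ProbabilityMeasure Ω)
    (hemp : ∀ n : ℕ, 1 ≤ n → ∀ y : Fin n → Ω,
      (emp n y : Measure Ω) = (n : ℝ≥0∞)⁻¹ • ∑ i : Fin n, Measure.dirac (y i))
    -- the law of L_n (the particles Y_i are independent with Y_i ~ ζ^{x_i}):
    (μ : ℕ → Measure (ProbabilityMeasure Ω))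
    (hμ : ∀ n : ℕ, μ n =
      (Measure.pi fun i : Fin n => (ζ (x n i) : Measure Ω)).map (emp n))
    -- the reference measure p(dx dy) = ρ⁰(dx) ζ^x(dy):
    (p : Measure (Ω × Ω))
    (hp : p = (ρ0 : Measure Ω).bind fun a => ((ζ a : Measure Ω)).map (Prod.mk a)) :
    IsLDP μ (fun ρ : ProbabilityMeasure Ω =>
      ⨅ q ∈ {q : Measure (Ω × Ω) |
          q.map Prod.fst = (ρ0 : Measure Ω) ∧ q.map Prod.snd = (ρ : Measure Ω) ∧
          IsProbabilityMeasure q},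
        relEntNN q p) := by
  have hT := tight_of_radon hRadon
  have hne : Nonempty Ω := ProbabilityMeasure.nonempty ρ0
  have hx : InitConv ρ0 x := by
    intro f
    refine (hinit f).congr' ?_
    filter_upwards [eventually_ne_atTop 0] with n hn
    rw [← empP_coe hn, integral_empP hn _ f.continuous.measurable]
  rw [← refP_eq_bind ρ0 ζ hζ] at hp
  subst hp
  have hlaw : ∀ S : Set (ProbabilityMeasure Ω), MeasurableSet S → ∀ᶠ n : ℕ in atTop,
      μ n S = piM ζ (x n) {y | pairE (x n) y ∈ sndP ⁻¹' S} := by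
    intro S hS
    filter_upwards [eventually_ge_atTop 1] with n hn
    rw [hμ n]
    exact law_apply (by omega) ζ (x n) (hemp n hn) hS
  refine ⟨⟨⟨sndP (refP ρ0 ζ hζ), ?_⟩, fun c hc => good_rate hT ρ0 _ hc⟩, ?_, ?_⟩
  · refine ne_top_of_le_ne_top ENNReal.zero_ne_top ((iInf₂_le (refP ρ0 ζ hζ : Measure (Ω × Ω))
      ⟨refP_fst ρ0 hζ, rfl, inferInstance⟩).trans ?_)
    rw [relEnt_eq_klDiv, InformationTheory.klDiv_self]
  · intro U hU
    have hUm : MeasurableSet U := by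
      have := measurableSet_closed_prob hU.isClosed_compl
      exact MeasurableSet.of_compl this
    set S := liminf (fun n : ℕ => (((n : ℝ)⁻¹ : ℝ) : EReal) * ENNReal.log (μ n U)) atTop with hS
    have key : ∀ q : Measure (Ω × Ω), ∀ ρ ∈ U, q.map Prod.fst = (ρ0 : Measure Ω) →
        q.map Prod.snd = (ρ : Measure Ω) → IsProbabilityMeasure q →
        relEntNN q (refP ρ0 ζ hζ) ≠ ⊤ → ∀ b : ℝ, (relEntNN q (refP ρ0 ζ hζ)).toReal < b →
        ((-b : ℝ) : EReal) ≤ S := by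
      intro q ρ hρ h1 h2 h3 hf b hb
      obtain ⟨c, hc⟩ := pair_lower hT hx hζ ⟨q, h3⟩ h1 hf (sndP ⁻¹' U) (hU.preimage continuous_sndP)
        (by
          have : sndP ⟨q, h3⟩ = ρ := Subtype.ext h2
          change sndP ⟨q, h3⟩ ∈ U
          rw [this]; exact hρ) b hb
      refine le_liminf_log (c := c) ?_
      filter_upwards [hc, hlaw U hUm] with n h4 h5
      rw [h5]; exact h4
    by_contra hcon
    obtain ⟨r, h1, h2⟩ := EReal.lt_iff_exists_real_btwn.1 (not_le.1 hcon)
    rw [EReal.lt_neg_comm, ← EReal.coe_neg] at h2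
    have hr : 0 < -r := by
      exact_mod_cast (EReal.coe_ennreal_nonneg _).trans_lt h2
    have h3 : ((-r : ℝ) : EReal) = ((ENNReal.ofReal (-r) : ℝ≥0∞) : EReal) := by
      rw [EReal.coe_ennreal_ofReal, max_eq_left hr.le]
    rw [h3, EReal.coe_ennreal_lt_coe_ennreal_iff] at h2
    obtain ⟨ρ, h2⟩ := iInf_lt_iff.1 h2
    obtain ⟨hρ, h2⟩ := iInf_lt_iff.1 h2
    obtain ⟨q, h2⟩ := iInf_lt_iff.1 h2
    obtain ⟨⟨g1, g2, g3⟩, h2⟩ := iInf_lt_iff.1 h2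
    have h5 := key q ρ hρ g1 g2 g3 h2.ne_top (-r)
      ((ENNReal.lt_ofReal_iff_toReal_lt h2.ne_top).1 h2)
    rw [neg_neg] at h5
    exact absurd h1 (not_lt.2 h5)
  · intro C hC
    have hCm : MeasurableSet C := measurableSet_closed_prob hC
    have key : ∀ b a : ℝ, 0 ≤ a → b < a → (∀ ρ ∈ C, ENNReal.ofReal a < ⨅ q ∈ {q : Measure (Ω × Ω) |
          q.map Prod.fst = (ρ0 : Measure Ω) ∧ q.map Prod.snd = (ρ : Measure Ω) ∧
          IsProbabilityMeasure q}, relEntNN q (refP ρ0 ζ hζ)) →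
        limsup (fun n : ℕ => (((n : ℝ)⁻¹ : ℝ) : EReal) * ENNReal.log (μ n C)) atTop ≤
        ((-b : ℝ) : EReal) := by
      intro b a ha hb h
      obtain ⟨c, hc⟩ := pair_upper hT hx hζ (hC.preimage continuous_sndP) ha hb (by
        intro q hq hq1 hle
        exact absurd ((h _ hq).trans_le (iInf₂_le (q : Measure (Ω × Ω))
          ⟨hq1, rfl, inferInstance⟩)) (not_lt.2 hle))
      refine limsup_log_le (c := c) ?_
      filter_upwards [hc, hlaw C hCm] with n h4 h5
      rw [h5]; exact h4
    by_contra hcon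
    obtain ⟨r, h1, h2⟩ := EReal.lt_iff_exists_real_btwn.1 (not_le.1 hcon)
    rw [EReal.neg_lt_comm, ← EReal.coe_neg] at h1
    rcases le_or_gt 0 r with hr | hr
    · refine absurd h2 (not_lt.2 (le_trans (limsup_log_le (c := 0) (b := 0) ?_) ?_))
      · filter_upwards [hlaw C hCm] with n h5
        rw [h5]
        simpa using prob_le_one
      · simpa using hr
    · obtain ⟨a, h3, h4⟩ := EReal.lt_iff_exists_real_btwn.1 h1
      have h3' : -r < a := by exact_mod_cast h3
      have ha : 0 ≤ a := by linarith
      have h6 : ((a : ℝ) : EReal) = ((ENNReal.ofReal a : ℝ≥0∞) : EReal) := by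
        rw [EReal.coe_ennreal_ofReal, max_eq_left ha]
      rw [h6, EReal.coe_ennreal_lt_coe_ennreal_iff] at h4
      have h5 := key (-r) a ha h3' fun ρ hρ => h4.trans_le (iInf₂_le ρ hρ)
      rw [neg_neg] at h5
      exact absurd h2 (not_lt.2 h5)

end
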